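/- In the standing setup, let C = C^0 and D = D^0 be components of X̂^0 such that C lies above D. Then C^t lies above D^t (as components of X̂^t) for every t ∈ [0,1]. -/

import Mathlib

open Set Metric Topology Filter

/-- The set of connected components of a set `S`. -/
def componentsOf {α : Type*} [TopologicalSpace α] (S : Set α) : Set (Set α) :=
  {C | ∃ x ∈ S, C = connectedComponentIn S x}

/-- The union of the unbounded connected components of the complement of `K`;
for compact `K` this is the (unique) unbounded component of `ℂ \ K`. -/
def unbddComp (K : Set ℂ) : Set ℂ :=
  {z : ℂ | z ∈ Kᶜ ∧ ¬ Bornology.IsBounded (connectedComponentIn Kᶜ z)}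

/-- `X^t = ℂ \ U^t`, where `U^t` is the unbounded component of `ℂ \ h^t(Bd X)`. -/
def XtSet (h : ℂ → ℝ → ℂ) (X : Set ℂ) (t : ℝ) : Set ℂ :=
  (unbddComp ((fun z => h z t) '' frontier X))ᶜ

/-- `X̂^t = exp⁻¹(X^t \ {0})`. -/
def hatXt (h : ℂ → ℝ → ℂ) (X : Set ℂ) (t : ℝ) : Set ℂ :=
  Complex.exp ⁻¹' (XtSet h X t \ {0})

/-- `X̂ = exp⁻¹(X \ {0})`. -/
def hatSet (X : Set ℂ) : Set ℂ := Complex.exp ⁻¹' (X \ {0})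

/-- The lift `exp⁻¹(Bd(X) \ {0})` of the punctured boundary of `X`. -/
def bdLift (X : Set ℂ) : Set ℂ := Complex.exp ⁻¹' (frontier X \ {0})

/-- The conditions on the path `s` in the definition of "C lies above D":
`s : [0,1] → {z : Re z ≤ 0} \ C`, `s 0 ∈ D`, `s 1 = 0`. -/
def AbovePath (C D : Set ℂ) (s : ℝ → ℂ) : Prop :=
  ContinuousOn s (Set.Icc 0 1) ∧ (∀ u ∈ Set.Icc (0:ℝ) 1, (s u).re ≤ 0 ∧ s u ∉ C) ∧
    s 0 ∈ D ∧ s 1 = 0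

/-- The ray `R = s([0,1]) ∪ [0,∞)` associated to the path `s`. -/
def AboveRay (s : ℝ → ℂ) : Set ℂ := s '' Set.Icc 0 1 ∪ (Complex.ofReal '' Set.Ici 0)

/-- `C` is contained in the unbounded component of `ℂ \ (D ∪ R)` containing `1 + 2πi`. -/
def AboveVia (C D : Set ℂ) (s : ℝ → ℂ) : Prop :=
  ¬ Bornology.IsBounded
      (connectedComponentIn (D ∪ AboveRay s)ᶜ ((1 : ℂ) + 2 * (Real.pi : ℂ) * Complex.I)) ∧
  C ⊆ connectedComponentIn (D ∪ AboveRay s)ᶜ ((1 : ℂ) + 2 * (Real.pi : ℂ) * Complex.I)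

/-- `C` lies above `D`. -/
def LiesAbove (C D : Set ℂ) : Prop := ∃ s : ℝ → ℂ, AbovePath C D s ∧ AboveVia C D s

/-!
All components of `X̂^t` are closed, connected, non-separating subsets of the left half-plane which
are unbounded to the left. If `C` and `D` are two disjoint sets of this kind, then for `z ∈ C` and
`w ∈ D` there are two natural logarithms: `Λ = log (z - w)`, which for fixed `z` is continuous in
`w ∈ D` and asymptotic to the principal branch of `log (-w)` at the end of `D`, and
`M = log (w - z)`, which for fixed `w` is normalized in the same way at the end of `C`. As
`exp (Λ - M) = -1`, the difference `Λ - M` is constant on the connected set `C × D`.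

`C` lies above `D` if and only if `Λ - M = π i`. This rests on Eilenberg's criterion: if `y - e` has
a logarithm normalized at infinity on a closed set `E`, then `x - e` has one too exactly when `x`
and `y` lie in the same component of `ℂ \ E`. The ray `R` runs off along the cut of `log (-w)`, so
for a far left point `z` the normalized logarithm on `R` is `log (w - z) + π i`, and it fits
together with `Λ` to a normalized logarithm on `D ∪ R` exactly when `Λ - M = π i`.

Along the isotopy both logarithms can be followed continuously: `𝐡^s x - 𝐡^s y` has a continuous
logarithm in `s` which interpolates between the values of `Λ` at times `0` and `t`, because this can
be checked after moving `y` to a far left boundary point of `D`, where all logarithms involved are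
principal. Hence `Λ - M` does not change.

That `C^t` and `D^t` are again of the above kind also uses Eilenberg's criterion: the image under
`h^t` of a closed subset of `Bd X` separates no other point of `h^t(Bd X)` from infinity, so that
`Bd X^t = h^t(Bd X)`.
-/
section Logarithms

open Complex

theorem eq_of_exp_comp_const {α : Type*} [TopologicalSpace α] {S : Set α} {f : α → ℂ}
    (hS : IsPreconnected S) (hf : ContinuousOn f S) {c : ℂ} (hc : ∀ x ∈ S, exp (f x) = c)
    {x y : α} (hx : x ∈ S) (hy : y ∈ S) : f x = f y :=
  isCoveringMap_exp.constOn_of_comp hS hf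
    (fun a ha b hb ↦ Subtype.ext ((hc a ha).trans (hc b hb).symm)) hx hy

theorem sub_eq_sub_of_exp_eq {α : Type*} [TopologicalSpace α] {S : Set α} {f g : α → ℂ}
    (hS : IsPreconnected S) (hf : ContinuousOn f S) (hg : ContinuousOn g S)
    (h : ∀ x ∈ S, exp (f x) = exp (g x)) {x y : α} (hx : x ∈ S) (hy : y ∈ S) :
    f x - g x = f y - g y :=
  eq_of_exp_comp_const (f := fun z ↦ f z - g z) (c := 1) hS (hf.sub hg)
    (fun z hz ↦ by rw [exp_sub, h z hz, div_self (exp_ne_zero _)]) hx hy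

theorem eq_of_exp_eq_of_norm_sub_lt {a b : ℂ} (h : exp a = exp b) (hab : ‖a - b‖ < 2 * Real.pi) :
    a = b := by
  obtain ⟨n, hn⟩ := exp_eq_exp_iff_exists_int.1 h
  have hn' : a - b = n * (2 * Real.pi * I) := by rw [hn]; ring
  have hlt : |(n : ℝ)| * (2 * Real.pi) < 1 * (2 * Real.pi) := by
    simpa [hn', abs_of_pos Real.pi_pos] using hab
  have hn0 : n = 0 := by
    rw [← Int.abs_lt_one_iff]
    exact_mod_cast lt_of_mul_lt_mul_right hlt Real.two_pi_pos.le
  simpa [hn0] using hn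

theorem exists_continuous_log {A : Type*} [TopologicalSpace A] [SimplyConnectedSpace A]
    [LocallyPathConnectedSpace A] {f : A → ℂ} (hf : Continuous f) (hf0 : ∀ a, f a ≠ 0)
    {a : A} {c : ℂ} (hc : exp c = f a) :
    ∃ g : A → ℂ, Continuous g ∧ g a = c ∧ ∀ x, exp (g x) = f x := by
  obtain ⟨g, ⟨hga, hg⟩, -⟩ := isCoveringMapOn_exp.existsUnique_continuousMap_lifts ⟨f, hf⟩
    hc hf0
  exact ⟨g, g.continuous, hga, congrFun hg⟩

theorem exists_homotopy_log {A : Type*} [TopologicalSpace A] {S : Set A} {F : A → ℝ → ℂ}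
    (hF : ContinuousOn (fun p : A × ℝ ↦ F p.1 p.2) (S ×ˢ Icc 0 1))
    (hF0 : ∀ a ∈ S, ∀ t ∈ Icc (0 : ℝ) 1, F a t ≠ 0)
    {g : A → ℂ} (hg : ContinuousOn g S) (hgF : ∀ a ∈ S, exp (g a) = F a 0) :
    ∃ G : A → ℝ → ℂ, ContinuousOn (fun p : A × ℝ ↦ G p.1 p.2) (S ×ˢ Icc 0 1) ∧
      (∀ a ∈ S, ∀ t ∈ Icc (0 : ℝ) 1, exp (G a t) = F a t) ∧ ∀ a ∈ S, G a 0 = g a := by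
  classical
  let K : C(unitInterval × S, {z : ℂ // z ≠ 0}) :=
    ⟨fun p ↦ ⟨F p.2 p.1, hF0 _ p.2.2 _ p.1.2⟩, .subtype_mk (hF.comp_continuous
      (f := fun p : unitInterval × S ↦ ((p.2 : A), (p.1 : ℝ))) (by fun_prop)
      fun p ↦ ⟨p.2.2, p.1.2⟩) _⟩
  let g₀ : C(S, ℂ) := ⟨fun a ↦ g a, hg.domRestrict⟩
  have hK : ∀ a, K (0, a) = ⟨exp (g₀ a), exp_ne_zero _⟩ := fun a ↦
    Subtype.ext (hgF a a.2).symm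
  let L := isCoveringMap_exp.liftHomotopy K g₀ hK
  let G : A → ℝ → ℂ := fun a t ↦
    if h : a ∈ S ∧ t ∈ Icc (0 : ℝ) 1 then L (⟨t, h.2⟩, ⟨a, h.1⟩) else 0
  have hG : ∀ {a t} (ha : a ∈ S) (ht : t ∈ Icc (0 : ℝ) 1), G a t = L (⟨t, ht⟩, ⟨a, ha⟩) :=
    fun ha ht ↦ dif_pos ⟨ha, ht⟩
  refine ⟨G, ?_, fun a ha t ht ↦ ?_, fun a ha ↦ ?_⟩
  · rw [continuousOn_iff_continuous_domRestrict]
    have hL : Continuous fun p : ↥(S ×ˢ Icc (0 : ℝ) 1) ↦ L (⟨p.1.2, p.2.2⟩, ⟨p.1.1, p.2.1⟩) :=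
      L.continuous.comp (by fun_prop)
    exact hL.congr fun p ↦ (hG p.2.1 p.2.2).symm
  · rw [hG ha ht]
    exact congrArg Subtype.val
      (congrFun (isCoveringMap_exp.liftHomotopy_lifts K g₀ hK) (⟨t, ht⟩, ⟨a, ha⟩))
  · rw [hG ha (left_mem_Icc.2 zero_le_one)]
    exact isCoveringMap_exp.liftHomotopy_zero K g₀ hK ⟨a, ha⟩

theorem not_exists_log_on_sphere {g : ℂ → ℂ} {x : ℂ} {r : ℝ} (hr : 0 < r)
    (hg : ContinuousOn g (sphere x r)) : ¬ ∀ w ∈ sphere x r, exp (g w) = x - w := by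
  intro h
  have hmem : ∀ θ, circleMap x (-r) θ ∈ sphere x r := fun θ ↦ by
    have := circleMap_mem_sphere' x (-r) θ
    rwa [abs_neg, abs_of_pos hr] at this
  have hlog := sub_eq_sub_of_exp_eq (f := fun θ : ℝ ↦ g (circleMap x (-r) θ))
    (g := fun θ : ℝ ↦ log r + θ * I) isPreconnected_univ
    (hg.comp (continuous_circleMap _ _).continuousOn fun θ _ ↦ hmem θ) (by fun_prop)
    (fun θ _ ↦ by
      rw [h _ (hmem θ), exp_add, exp_log (by exact_mod_cast hr.ne')]
      simp [circleMap])
    (mem_univ 0) (mem_univ (0 + 2 * Real.pi))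
  rw [periodic_circleMap x (-r) 0] at hlog
  simp at hlog

theorem log_div_of_arg_sub_mem {u v : ℂ} (hu : u ≠ 0) (hv : v ≠ 0)
    (h : arg u - arg v ∈ Ioc (-Real.pi) Real.pi) : log (u / v) = log u - log v := by
  rw [← log_exp (x := log u - log v) (by simpa [log_im] using h.1) (by simpa [log_im] using h.2),
    exp_sub, exp_log hu, exp_log hv]

theorem arg_sub_arg_mem_of_re_pos {u v : ℂ} (hu : 0 < u.re) (hv : 0 < v.re) :
    arg u - arg v ∈ Ioc (-Real.pi) Real.pi := by
  have hu' := abs_lt.1 (abs_arg_lt_pi_div_two_iff.2 (.inl hu))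
  have hv' := abs_lt.1 (abs_arg_lt_pi_div_two_iff.2 (.inl hv))
  constructor <;> linarith [hu'.1, hu'.2, hv'.1, hv'.2]

theorem inv_mem_slitPlane {z : ℂ} (hz : z ∈ slitPlane) : z⁻¹ ∈ slitPlane := by
  rw [mem_slitPlane_iff_arg] at hz ⊢
  refine ⟨?_, inv_ne_zero hz.2⟩
  rw [arg_inv, if_neg hz.1]
  exact fun h ↦ (neg_pi_lt_arg z).ne' (by rw [← h, neg_neg])

theorem div_mem_slitPlane_of_norm_sub_lt {u v : ℂ} (h : ‖u - v‖ < ‖v‖) : u / v ∈ slitPlane := by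
  have hv : v ≠ 0 := norm_pos_iff.1 ((norm_nonneg _).trans_lt h)
  have hlt : ‖(u - v) / v‖ < 1 := by rwa [norm_div, div_lt_one (norm_pos_iff.2 hv)]
  simpa [sub_div, div_self hv] using mem_slitPlane_of_norm_lt_one hlt

theorem tendsto_div_sub_cobounded (x y : ℂ) :
    Tendsto (fun w ↦ (x - w) / (y - w)) (Bornology.cobounded ℂ) (𝓝 1) := by
  have hinv : Tendsto (fun w : ℂ ↦ (y - w)⁻¹) (Bornology.cobounded ℂ) (𝓝 0) :=
    tendsto_inv₀_cobounded.comp (tendsto_const_sub_cobounded y)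
  have hlim : Tendsto (fun w : ℂ ↦ 1 + (x - y) * (y - w)⁻¹) (Bornology.cobounded ℂ) (𝓝 1) := by
    simpa using (hinv.const_mul (x - y)).const_add 1
  refine hlim.congr' ?_
  filter_upwards [Bornology.isBounded_def.1 (Bornology.isBounded_singleton (x := y))] with w hw
  have : y - w ≠ 0 := sub_ne_zero.2 (Ne.symm hw)
  field_simp
  ring

theorem tendsto_log_div_sub_cobounded (x y : ℂ) :
    Tendsto (fun w ↦ log ((x - w) / (y - w))) (Bornology.cobounded ℂ) (𝓝 0) :=
  log_one ▸ (continuousAt_clog one_mem_slitPlane).tendsto.comp (tendsto_div_sub_cobounded x y)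

end Logarithms

section Components

variable {α : Type*} [TopologicalSpace α]

theorem exists_continuousOn_union {β : Type*} [TopologicalSpace β] {A B : Set α} {f g : α → β}
    (hA : IsClosed A) (hB : IsClosed B) (hf : ContinuousOn f A) (hg : ContinuousOn g B)
    (hfg : EqOn f g (A ∩ B)) :
    ∃ k : α → β, ContinuousOn k (A ∪ B) ∧ EqOn k f A ∧ EqOn k g B := by
  classical
  have hkA : EqOn (A.piecewise f g) f A := A.piecewise_eqOn f g
  have hkB : EqOn (A.piecewise f g) g B := fun x hx ↦ by
    by_cases hxA : x ∈ A
    · rw [hkA hxA, hfg ⟨hxA, hx⟩]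
    · exact A.piecewise_eq_of_notMem f g hxA
  exact ⟨_, (hf.congr hkA).union_of_isClosed (hg.congr hkB) hA hB, hkA, hkB⟩

theorem frontier_connectedComponentIn_subset [LocallyConnectedSpace α] (F : Set α) (x : α) :
    frontier (connectedComponentIn F x) ⊆ frontier F := by
  refine fun w hw ↦ ⟨closure_mono (connectedComponentIn_subset F x) hw.1, fun hwF ↦ hw.2 ?_⟩
  obtain ⟨V, ⟨hVF, hVo, hwV, hVc⟩⟩ :=
    locallyConnectedSpace_iff_subsets_isOpen_isConnected.1 ‹_› w F (mem_interior_iff_mem_nhds.1 hwF)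
  obtain ⟨u, huV, hu⟩ := mem_closure_iff.1 hw.1 V hVo hwV
  rw [connectedComponentIn_eq hu]
  exact mem_interior.2 ⟨V, hVc.isPreconnected.subset_connectedComponentIn huV hVF, hVo, hwV⟩

theorem isClosed_connectedComponentIn {F : Set α} (hF : IsClosed F) (x : α) :
    IsClosed (connectedComponentIn F x) := by
  by_cases hx : x ∈ F
  · refine isClosed_of_closure_subset (isPreconnected_connectedComponentIn.closure
      |>.subset_connectedComponentIn (subset_closure (mem_connectedComponentIn hx)) ?_)
    exact closure_minimal (connectedComponentIn_subset F x) hF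
  · simp [connectedComponentIn_eq_empty hx]

theorem frontier_connectedComponentIn_eq [LocallyConnectedSpace α] {F : Set α} (hF : IsClosed F)
    (x : α) : frontier (connectedComponentIn F x) = connectedComponentIn F x ∩ frontier F :=
  Subset.antisymm
    (subset_inter (isClosed_connectedComponentIn hF x).frontier_subset
      (frontier_connectedComponentIn_subset F x))
    fun _ hp ↦ ⟨subset_closure hp.1,
      fun h ↦ hp.2.2 (interior_mono (connectedComponentIn_subset F x) h)⟩

theorem mem_frontier_connectedComponentIn [LocallyConnectedSpace α] {F : Set α} (hF : IsClosed F)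
    {x : α} (hx : x ∈ frontier F) : x ∈ frontier (connectedComponentIn F x) :=
  frontier_connectedComponentIn_eq hF x ▸ ⟨mem_connectedComponentIn (hF.frontier_subset hx), hx⟩

theorem disjoint_connectedComponentIn {F : Set α} {x y : α} (hx : x ∈ F)
    (hxy : x ∉ connectedComponentIn F y) :
    Disjoint (connectedComponentIn F x) (connectedComponentIn F y) :=
  disjoint_left.2 fun _ hzx hzy ↦ hxy <|
    connectedComponentIn_eq hzy ▸ connectedComponentIn_eq hzx ▸ mem_connectedComponentIn hx

theorem subset_of_isPreconnected_of_disjoint_frontier {s u : Set α} (hs : IsPreconnected s)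
    (hsu : Disjoint s (frontier u)) (h : (s ∩ u).Nonempty) : s ⊆ u := by
  have hint : ∀ z ∈ s, z ∈ closure u → z ∈ interior u := fun z hz hzu ↦
    by_contra fun hzi ↦ hsu.le_bot ⟨hz, hzu, hzi⟩
  obtain ⟨x, hxs, hxu⟩ := h
  refine (hs.subset_left_of_subset_union isOpen_interior isClosed_closure.isOpen_compl
    (disjoint_compl_right_iff_subset.2 (interior_subset.trans subset_closure)) (fun z hz ↦ ?_)
    ⟨x, hxs, hint x hxs (subset_closure hxu)⟩).trans interior_subset
  exact (em (z ∈ closure u)).imp (hint z hz) id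

theorem isPreconnected_insert_of_mem_closure {s : Set α} (hs : IsPreconnected s) {p : α}
    (hp : p ∈ closure s) : IsPreconnected (insert p s) :=
  hs.subset_closure (subset_insert _ _) (insert_subset hp subset_closure)

theorem mem_connectedComponentIn_compl_of_mem_frontier {X S : Set α}
    (hXc : IsPreconnected Xᶜ) {p q : α} (hp : p ∈ frontier X) (hq : q ∉ X) (hSX : S ⊆ X)
    (hpS : p ∉ S) : p ∈ connectedComponentIn Sᶜ q :=
  (isPreconnected_insert_of_mem_closure hXc
    (frontier_subset_closure (by rwa [frontier_compl]))).subset_connectedComponentIn (.inr hq)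
    (insert_subset hpS (compl_subset_compl.2 hSX)) (mem_insert p _)

theorem isPreconnected_compl_connectedComponentIn [PreconnectedSpace α] [LocallyConnectedSpace α]
    {F : Set α} (hF : IsClosed F) (hFne : Fᶜ.Nonempty) (hFc : IsPreconnected Fᶜ) (x : α) :
    IsPreconnected (connectedComponentIn F x)ᶜ := by
  obtain ⟨u, hu⟩ := hFne
  have hsub : Fᶜ ⊆ (connectedComponentIn F x)ᶜ :=
    compl_subset_compl.2 (connectedComponentIn_subset F x)
  refine isPreconnected_of_forall u fun z hz ↦ ?_
  by_cases hzF : z ∈ F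
  · set K := connectedComponentIn F z
    have hzK : z ∈ K := mem_connectedComponentIn hzF
    have hK : K ⊆ (connectedComponentIn F x)ᶜ := fun w hwK hwx ↦
      hz (by rwa [connectedComponentIn_eq hwx, ← connectedComponentIn_eq hwK])
    obtain ⟨p, hp⟩ : (frontier K).Nonempty := nonempty_frontier_iff.2
      ⟨⟨z, hzK⟩, fun h ↦ hu (connectedComponentIn_subset F z (h.ge (mem_univ u)))⟩
    rw [frontier_connectedComponentIn_eq hF] at hp
    have hpF : p ∈ closure Fᶜ := frontier_subset_closure (frontier_compl F ▸ hp.2)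
    exact ⟨insert p Fᶜ ∪ K, union_subset (insert_subset (hK hp.1) hsub) hK, .inl (.inr hu),
      .inr hzK, .union p (mem_insert _ _) hp.1 (isPreconnected_insert_of_mem_closure hFc hpF)
        isPreconnected_connectedComponentIn⟩
  · exact ⟨Fᶜ, hsub, hu, hzF, hFc⟩

theorem exists_isClosed_inter_of_connectedComponentIn_subset [T2Space α] {S U : Set α}
    (hS : IsCompact S) (hU : IsOpen U) {x : α} (hx : x ∈ S) (hSU : connectedComponentIn S x ⊆ U) :
    ∃ O, IsOpen O ∧ IsClosed (S ∩ O) ∧ x ∈ O ∧ S ∩ O ⊆ U := by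
  have : CompactSpace S := isCompact_iff_compactSpace.1 hS
  let N := {s : Set S // IsClopen s ∧ (⟨x, hx⟩ : S) ∈ s}
  have : Nonempty N := ⟨⟨univ, isClopen_univ, mem_univ _⟩⟩
  obtain ⟨⟨s, hs, hxs⟩, hsU⟩ := exists_subset_nhds_of_compactSpace (V := fun s : N ↦ s.val)
    (fun s t ↦ ⟨⟨s.1 ∩ t.1, s.2.1.inter t.2.1, s.2.2, t.2.2⟩, inter_subset_left,
      inter_subset_right⟩) (fun s ↦ s.2.1.1) (U := Subtype.val ⁻¹' U) fun y hy ↦ by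
      rw [← connectedComponent_eq_iInter_isClopen] at hy
      refine (hU.preimage continuous_subtype_val).mem_nhds (hSU ?_)
      exact connectedComponentIn_eq_image hx ▸ ⟨y, hy, rfl⟩
  obtain ⟨O, hO, rfl⟩ := isOpen_induced_iff.1 hs.2
  refine ⟨O, hO, ?_, hxs, fun y hy ↦ hsU (a := ⟨y, hy.1⟩) hy.2⟩
  rw [← Subtype.image_preimage_coe]
  exact (hs.1.isCompact.image continuous_subtype_val).isClosed

/-- The boundary bumping theorem. -/
theorem not_connectedComponentIn_inter_subset_interior [T2Space α] {X F : Set α}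
    (hX : IsCompact X) (hXc : IsPreconnected X) (hF : IsClosed F) (hXF : ¬ X ⊆ F) {x : α}
    (hx : x ∈ X ∩ F) : ¬ connectedComponentIn (X ∩ F) x ⊆ interior F := by
  intro h
  obtain ⟨O, hO, hcl, hxO, hOF⟩ := exists_isClosed_inter_of_connectedComponentIn_subset
    (hX.inter_right hF) isOpen_interior hx h
  obtain ⟨y, hyX, hyF⟩ := not_subset.1 hXF
  obtain ⟨w, hwX, ⟨hwO, hwF⟩, hw⟩ := hXc (O ∩ interior F) (X ∩ F ∩ O)ᶜ (hO.inter isOpen_interior)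
    hcl.isOpen_compl (fun w _ ↦ (em (w ∈ X ∩ F ∩ O)).imp (fun hw ↦ ⟨hw.2, hOF hw⟩) id)
    ⟨x, hx.1, hxO, hOF ⟨hx, hxO⟩⟩ ⟨y, hyX, fun hy ↦ hyF hy.1.2⟩
  exact hw ⟨⟨hwX, interior_subset hwF⟩, hwO⟩

end Components

section Eilenberg

open Complex Bornology

theorem not_isBounded_connectedComponentIn_compl_of_log {E : Set ℂ} (hE : IsClosed E) {x : ℂ}
    (hx : x ∉ E) {u L : ℂ → ℂ} (hu : Continuous u)
    (hu0 : ∀ w ∈ connectedComponentIn Eᶜ x, u w ≠ 0) (hL : ContinuousOn L E)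
    (hLu : ∀ w ∈ E, exp (L w) * u w = x - w) : ¬ IsBounded (connectedComponentIn Eᶜ x) := by
  classical
  intro hb
  set V := connectedComponentIn Eᶜ x
  have hxV : x ∈ V := mem_connectedComponentIn hx
  have hVE : frontier V ⊆ E := (frontier_connectedComponentIn_subset Eᶜ x).trans
    (frontier_compl E ▸ hE.frontier_subset)
  obtain ⟨M, hM⟩ := ContinuousMap.exists_extension' hE.isClosedEmbedding_subtypeVal
    ⟨fun a : E ↦ L a, hL.domRestrict⟩
  have hML : ∀ w ∈ E, M w = L w := fun w hw ↦ congrFun hM ⟨w, hw⟩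
  let f : ℂ → ℂ := V.piecewise (fun w ↦ exp (M w) * u w) fun w ↦ x - w
  have hf : Continuous f := by
    refine Continuous.piecewise (fun w hw ↦ ?_) (by fun_prop) (by fun_prop)
    rw [hML w (hVE hw), hLu w (hVE hw)]
  have hf0 : ∀ z, f z ≠ 0 := fun z ↦ by
    by_cases hz : z ∈ V
    · simpa [f, hz] using hu0 z hz
    · simpa [f, hz, sub_eq_zero] using fun h : x = z ↦ hz (h ▸ hxV)
  obtain ⟨g, hg, -, hgf⟩ := exists_continuous_log hf hf0 (exp_log (hf0 0))
  obtain ⟨r, hr, hVr⟩ := hb.subset_ball_lt 0 x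
  refine not_exists_log_on_sphere hr (hg.continuousOn (s := sphere x r)) fun w hw ↦ ?_
  rw [hgf]
  exact V.piecewise_eq_of_notMem _ _ fun hwV ↦ (mem_ball.1 (hVr hwV)).ne (mem_sphere.1 hw)

/-- A continuous logarithm `Λ` of `α ↦ β - α` on `A`, normalized at infinity by asymptotic
agreement with the principal branch of `log (-α)`. On a connected unbounded `A` it is unique; on a
bounded `A` the normalization is vacuous. -/
structure IsNormalizedLog (A : Set ℂ) (β : ℂ) (Λ : ℂ → ℂ) : Prop where
  continuousOn : ContinuousOn Λ A
  exp_eq : ∀ α ∈ A, exp (Λ α) = β - α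
  tendsto : Tendsto (fun α ↦ Λ α - log (-α)) (cobounded ℂ ⊓ 𝓟 A) (𝓝 0)

theorem cobounded_inf_principal_eq_bot {α : Type*} [Bornology α] {A : Set α}
    (hA : IsBounded A) : cobounded α ⊓ 𝓟 A = ⊥ :=
  (disjoint_principal_right.2 (isBounded_def.1 hA)).eq_bot

theorem neBot_cobounded_inf_principal {α : Type*} [Bornology α] {A : Set α}
    (hA : ¬ IsBounded A) : (cobounded α ⊓ 𝓟 A).NeBot :=
  neBot_iff.2 fun h ↦ hA (isBounded_def.2 (disjoint_principal_right.1 (disjoint_iff.2 h)))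

theorem eventually_forall_div_sub_mem_slitPlane {A : Set ℂ} (hA : IsClosed A) {β : ℂ}
    (hβ : β ∉ A) : ∀ᶠ γ in 𝓝 β, ∀ w ∈ A, (γ - w) / (β - w) ∈ slitPlane := by
  obtain ⟨r, hr, hrA⟩ := Metric.isOpen_iff.1 hA.isOpen_compl β hβ
  filter_upwards [ball_mem_nhds β hr] with γ hγ w hw
  refine div_mem_slitPlane_of_norm_sub_lt ?_
  rw [sub_sub_sub_cancel_right, ← dist_eq_norm, ← dist_eq_norm, dist_comm β]
  exact (mem_ball.1 hγ).trans_le (not_lt.1 fun h ↦ hrA h hw)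

namespace IsNormalizedLog

variable {A B E : Set ℂ} {β γ x y : ℂ} {Λ M : ℂ → ℂ}

theorem sub_ne_zero (hΛ : IsNormalizedLog A β Λ) {w : ℂ} (hw : w ∈ A) : β - w ≠ 0 :=
  hΛ.exp_eq w hw ▸ exp_ne_zero _

theorem notMem (hΛ : IsNormalizedLog A β Λ) : β ∉ A := fun h ↦
  hΛ.sub_ne_zero h (sub_self β)

theorem mono (hΛ : IsNormalizedLog A β Λ) (hBA : B ⊆ A) : IsNormalizedLog B β Λ :=
  ⟨hΛ.continuousOn.mono hBA, fun α hα ↦ hΛ.exp_eq α (hBA hα),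
    hΛ.tendsto.mono_left (inf_le_inf_left _ (principal_mono.2 hBA))⟩

theorem of_isBounded (hA : IsBounded A) (hΛ : ContinuousOn Λ A)
    (hexp : ∀ α ∈ A, exp (Λ α) = β - α) : IsNormalizedLog A β Λ :=
  ⟨hΛ, hexp, by
    rw [cobounded_inf_principal_eq_bot hA]
    exact tendsto_bot⟩

theorem congr (hΛ : IsNormalizedLog A β Λ) (h : EqOn M Λ A) : IsNormalizedLog A β M where
  continuousOn := hΛ.continuousOn.congr h
  exp_eq α hα := by rw [h hα, hΛ.exp_eq α hα]
  tendsto := hΛ.tendsto.congr' (eventually_inf_principal.2 (.of_forall fun α hα ↦ by simp [h hα]))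

theorem union (hA : IsClosed A) (hB : IsClosed B) (hΛ : IsNormalizedLog A β Λ)
    (hM : IsNormalizedLog B β M) (h : EqOn Λ M (A ∩ B)) :
    ∃ N, IsNormalizedLog (A ∪ B) β N := by
  obtain ⟨N, hN, hNA, hNB⟩ :=
    exists_continuousOn_union hA hB hΛ.continuousOn hM.continuousOn h
  refine ⟨N, hN, fun α hα ↦ hα.elim ((hΛ.congr hNA).exp_eq α) ((hM.congr hNB).exp_eq α), ?_⟩
  rw [← sup_principal, inf_sup_left, tendsto_sup]
  exact ⟨(hΛ.congr hNA).tendsto, (hM.congr hNB).tendsto⟩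

theorem add_log_div (hΛ : IsNormalizedLog A β Λ)
    (h : ∀ w ∈ A, (γ - w) / (β - w) ∈ slitPlane) :
    IsNormalizedLog A γ fun w ↦ Λ w + log ((γ - w) / (β - w)) where
  continuousOn := hΛ.continuousOn.add (ContinuousOn.clog
    (.div (by fun_prop) (by fun_prop) fun _ ↦ hΛ.sub_ne_zero) h)
  exp_eq w hw := by
    rw [exp_add, hΛ.exp_eq w hw, exp_log (slitPlane_ne_zero (h w hw)),
      mul_div_cancel₀ _ (hΛ.sub_ne_zero hw)]
  tendsto := by
    simpa [add_sub_right_comm] using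
      hΛ.tendsto.add ((tendsto_log_div_sub_cobounded γ β).mono_left inf_le_left)

theorem eventuallyEq (hΛ : IsNormalizedLog A β Λ) (hM : IsNormalizedLog A β M) :
    Λ =ᶠ[cobounded ℂ ⊓ 𝓟 A] M := by
  have hlim : Tendsto (fun α ↦ Λ α - M α) (cobounded ℂ ⊓ 𝓟 A) (𝓝 0) := by
    simpa using hΛ.tendsto.sub hM.tendsto
  filter_upwards [hlim.eventually (ball_mem_nhds 0 Real.two_pi_pos),
    mem_inf_of_right (mem_principal_self A)] with α hα hαA
  exact eq_of_exp_eq_of_norm_sub_lt ((hΛ.exp_eq α hαA).trans (hM.exp_eq α hαA).symm)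
    (mem_ball_zero_iff.1 hα)

theorem exists_eq (hA : ¬ IsBounded A) (hΛ : IsNormalizedLog A β Λ)
    (hM : IsNormalizedLog A β M) : ∃ α ∈ A, Λ α = M α :=
  have := neBot_cobounded_inf_principal hA
  ((eventually_mem_set.2 (mem_inf_of_right (mem_principal_self A))).and
    (hΛ.eventuallyEq hM)).exists

theorem eqOn (hA : IsPreconnected A) (hA' : ¬ IsBounded A) (hΛ : IsNormalizedLog A β Λ)
    (hM : IsNormalizedLog A β M) : EqOn Λ M A := fun w hw ↦ by
  obtain ⟨α, hα, hαeq⟩ := exists_eq hA' hΛ hM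
  rw [← sub_eq_zero, sub_eq_sub_of_exp_eq hA hΛ.continuousOn hM.continuousOn
    (fun v hv ↦ (hΛ.exp_eq v hv).trans (hM.exp_eq v hv).symm) hw hα, hαeq, sub_self]

theorem continuousOn_prod (hA : IsClosed A) (hAc : IsPreconnected A) (hA' : ¬ IsBounded A)
    {Λ : ℂ → ℂ → ℂ} (hΛ : ∀ β ∈ B, IsNormalizedLog A β (Λ β)) :
    ContinuousOn (fun p : ℂ × ℂ ↦ Λ p.1 p.2) (B ×ˢ A) := by
  rintro ⟨β, α⟩ ⟨hβ, hα⟩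
  have hβA := hΛ β hβ
  have hne := hβA.sub_ne_zero hα
  have hcont : ContinuousWithinAt (fun p : ℂ × ℂ ↦ Λ β p.2 + log ((p.1 - p.2) / (β - p.2)))
      (B ×ˢ A) (β, α) := by
    refine ((hβA.continuousOn α hα).comp (t := A) (f := Prod.snd) (x := (β, α))
      continuous_snd.continuousWithinAt fun p hp ↦ hp.2).add (ContinuousWithinAt.clog ?_ ?_)
    · exact ContinuousWithinAt.div (f := fun p : ℂ × ℂ ↦ p.1 - p.2) (by fun_prop) (by fun_prop) hne
    · simp [div_self hne]
  refine hcont.congr_of_eventuallyEq ?_ (by simp [div_self hne])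
  have hev := continuous_fst.tendsto (β, α) |>.eventually
    (eventually_forall_div_sub_mem_slitPlane hA hβA.notMem)
  filter_upwards [nhdsWithin_le_nhds hev, self_mem_nhdsWithin] with p hp hpBA
  exact eqOn hAc hA' (hΛ p.1 hpBA.1) (hβA.add_log_div hp) hpBA.2

theorem exists_of_mem_connectedComponentIn (hE : IsClosed E) (hM : IsNormalizedLog E y M)
    (hx : x ∈ connectedComponentIn Eᶜ y) : ∃ Λ, IsNormalizedLog E x Λ := by
  refine isPreconnected_connectedComponentIn.induction₂'
    (fun y x ↦ (∃ M, IsNormalizedLog E y M) → ∃ Λ, IsNormalizedLog E x Λ)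
    (fun z hz ↦ ?_) (fun _ _ _ _ _ _ h₁ h₂ ↦ h₂ ∘ h₁)
    (mem_connectedComponentIn hM.notMem) hx ⟨M, hM⟩
  have hev := eventually_forall_div_sub_mem_slitPlane hE (connectedComponentIn_subset _ _ hz)
  filter_upwards [nhdsWithin_le_nhds hev] with w hw
  refine ⟨fun ⟨Λ, hΛ⟩ ↦ ⟨_, hΛ.add_log_div hw⟩, fun ⟨Λ, hΛ⟩ ↦ ⟨_, hΛ.add_log_div fun v hv ↦ ?_⟩⟩
  rw [← inv_div]
  exact inv_mem_slitPlane (hw v hv)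

/-- Eilenberg's criterion, relative to infinity. -/
theorem mem_connectedComponentIn (hE : IsClosed E) (hΛ : IsNormalizedLog E x Λ)
    (hM : IsNormalizedLog E y M) : x ∈ connectedComponentIn Eᶜ y := by
  by_contra hxy
  have hlim : Tendsto (fun w ↦ Λ w - M w - log ((x - w) / (y - w))) (cobounded ℂ ⊓ 𝓟 E) (𝓝 0) := by
    simpa using (hΛ.tendsto.sub hM.tendsto).sub
      ((tendsto_log_div_sub_cobounded x y).mono_left inf_le_left)
  obtain ⟨r, -, hr⟩ := (hasBasis_cobounded_norm.eventually_iff).1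
    ((eventually_inf_principal.1 (hlim.eventually (ball_mem_nhds 0 Real.two_pi_pos))).and
      ((tendsto_div_sub_cobounded x y).eventually (isOpen_slitPlane.mem_nhds one_mem_slitPlane)))
  set F : Set ℂ := {w | r ≤ ‖w‖}
  have hF : IsClosed F := isClosed_le continuous_const continuous_norm
  have hne : ∀ w ∈ F, x - w ≠ 0 ∧ y - w ≠ 0 := fun w hw ↦
    div_ne_zero_iff.1 (slitPlane_ne_zero (hr hw).2)
  have hexpE : ∀ w ∈ E, exp (Λ w - M w) = (x - w) / (y - w) := fun w hw ↦ by
    rw [exp_sub, hΛ.exp_eq w hw, hM.exp_eq w hw]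
  have hexpF : ∀ w ∈ F, exp (log ((x - w) / (y - w))) = (x - w) / (y - w) := fun w hw ↦
    exp_log (slitPlane_ne_zero (hr hw).2)
  obtain ⟨L, hL, hLE, hLF⟩ := exists_continuousOn_union hE hF
    (f := fun w ↦ Λ w - M w) (hΛ.continuousOn.sub hM.continuousOn)
    (g := fun w ↦ log ((x - w) / (y - w)))
    (ContinuousOn.clog (.div (by fun_prop) (by fun_prop) fun w hw ↦ (hne w hw).2)
      fun w hw ↦ (hr hw).2)
    fun w hw ↦ eq_of_exp_eq_of_norm_sub_lt ((hexpE w hw.1).trans (hexpF w hw.2).symm)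
      (by simpa using (hr hw.2).1 hw.1)
  have hxEF : x ∉ E ∪ F := fun h ↦ h.elim hΛ.notMem fun hxF ↦ (hne x hxF).1 (sub_self x)
  refine not_isBounded_connectedComponentIn_compl_of_log (u := fun w ↦ y - w) (hE.union hF) hxEF
    (by fun_prop) (fun w hw hyw ↦ ?_) hL (fun w hw ↦ ?_) ?_
  · rw [← _root_.sub_eq_zero.1 hyw] at hw
    have hy := connectedComponentIn_mono x (compl_subset_compl.2 subset_union_left) hw
    exact hxy (connectedComponentIn_eq hy ▸ _root_.mem_connectedComponentIn hΛ.notMem)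
  · rcases hw with hw | hw
    · rw [hLE hw, hexpE w hw, div_mul_cancel₀ _ (hM.sub_ne_zero hw)]
    · rw [hLF hw, hexpF w hw, div_mul_cancel₀ _ (hne w hw).2]
  · refine (isBounded_ball (x := (0 : ℂ)) (r := r)).subset
      ((connectedComponentIn_subset _ _).trans fun w hw ↦ ?_)
    rw [mem_ball_zero_iff]
    exact not_le.1 fun h ↦ hw (.inr h)

end IsNormalizedLog

theorem isNormalizedLog_log_sub {A : Set ℂ} {β : ℂ} (hA : ∀ w ∈ A, β - w ∈ slitPlane)
    (harg : ∀ᶠ w in cobounded ℂ ⊓ 𝓟 A, arg (β - w) - arg (-w) ∈ Ioc (-Real.pi) Real.pi) :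
    IsNormalizedLog A β fun w ↦ log (β - w) where
  continuousOn := ContinuousOn.clog (by fun_prop) hA
  exp_eq w hw := exp_log (slitPlane_ne_zero (hA w hw))
  tendsto := by
    refine ((tendsto_log_div_sub_cobounded β 0).mono_left inf_le_left).congr' ?_
    filter_upwards [harg, mem_inf_of_right (mem_principal_self A),
      mem_inf_of_left (isBounded_def.1 (isBounded_singleton (x := (0 : ℂ))))] with w hw hwA hw0
    rw [zero_sub, log_div_of_arg_sub_mem (slitPlane_ne_zero (hA w hwA)) (neg_ne_zero.2 hw0) hw]

/-- Eilenberg's criterion for a compact set, with `q` in its unbounded complementary component. -/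
theorem mem_connectedComponentIn_compl_iff_exists_log {S : Set ℂ} (hS : IsCompact S) {p q : ℂ}
    (hSq : ∀ w ∈ S, w.re < q.re) : p ∈ connectedComponentIn Sᶜ q ↔
      ∃ ℓ : ℂ → ℂ, ContinuousOn ℓ S ∧ ∀ w ∈ S, exp (ℓ w) = p - w := by
  have hq : IsNormalizedLog S q fun w ↦ log (q - w) :=
    isNormalizedLog_log_sub (fun w hw ↦ .inl (by simpa using hSq w hw))
      (by simp [cobounded_inf_principal_eq_bot hS.isBounded])
  constructor
  · intro hp
    obtain ⟨ℓ, hℓ⟩ := hq.exists_of_mem_connectedComponentIn hS.isClosed hp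
    exact ⟨ℓ, hℓ.continuousOn, hℓ.exp_eq⟩
  · rintro ⟨ℓ, hℓ, hexp⟩
    exact (IsNormalizedLog.of_isBounded hS.isBounded hℓ hexp).mem_connectedComponentIn
      hS.isClosed hq

theorem eq_of_exp_eq_exp_neg_on_frontier {C : Set ℂ} (hC : IsClosed C) (hCc : IsPreconnected C)
    (hCc' : IsPreconnected Cᶜ) {φ : ℂ → ℂ} (hφ : Continuous φ)
    (h : ∀ a ∈ frontier C, exp (φ a) = exp (-φ a)) {p q : ℂ} (hp : p ∈ frontier C)
    (hq : q ∈ frontier C) : φ p = φ q := by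
  classical
  let f : ℂ → ℂ := C.piecewise (fun w ↦ exp (φ w)) fun w ↦ exp (-φ w)
  have hfC : EqOn f (fun w ↦ exp (φ w)) C := C.piecewise_eqOn _ _
  have hfC' : EqOn f (fun w ↦ exp (-φ w)) (closure Cᶜ) := fun z hz ↦ by
    by_cases hzC : z ∈ C
    · have hzf : z ∈ frontier C := by
        rw [frontier_eq_closure_inter_closure]
        exact ⟨subset_closure hzC, hz⟩
      exact (hfC hzC).trans (h z hzf)
    · exact C.piecewise_eq_of_notMem _ _ hzC
  have hf : Continuous f := Continuous.piecewise h (by fun_prop) (by fun_prop)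
  have hf0 : ∀ z, f z ≠ 0 := fun z ↦ by by_cases hz : z ∈ C <;> simp [f, hz]
  obtain ⟨g, hg, -, hgf⟩ := exists_continuous_log hf hf0 (exp_log (hf0 0))
  have hfr : frontier C ⊆ closure Cᶜ := by
    rw [← frontier_compl]
    exact frontier_subset_closure
  have hC₁ := sub_eq_sub_of_exp_eq hCc hg.continuousOn hφ.continuousOn
    (fun z hz ↦ (hgf z).trans (hfC hz)) (hC.frontier_subset hp) (hC.frontier_subset hq)
  have hC₂ := sub_eq_sub_of_exp_eq hCc'.closure hg.continuousOn hφ.neg.continuousOn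
    (fun z hz ↦ (hgf z).trans (hfC' hz)) (hfr hp) (hfr hq)
  simp only [Pi.neg_apply] at hC₂
  linear_combination (hC₂ - hC₁) / 2

/-- Unicoherence of the plane. -/
theorem isPreconnected_frontier_of_isPreconnected_compl {C : Set ℂ} (hC : IsClosed C)
    (hCc : IsPreconnected C) (hCc' : IsPreconnected Cᶜ) : IsPreconnected (frontier C) := by
  rw [isPreconnected_iff_subset_of_fully_disjoint_closed isClosed_frontier]
  intro u v hu hv huv hdisj
  by_contra! hcon
  obtain ⟨q, hq, hqu⟩ := not_subset.1 hcon.1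
  obtain ⟨p, hp, hpv⟩ := not_subset.1 hcon.2
  obtain ⟨φ, hφu, hφv, -⟩ := exists_continuous_zero_one_of_isClosed hu hv hdisj
  have hφp : φ p = 0 := hφu ((huv hp).resolve_right hpv)
  have hφq : φ q = 1 := hφv ((huv hq).resolve_left hqu)
  have hpq := eq_of_exp_eq_exp_neg_on_frontier hC hCc hCc'
    (φ := fun w ↦ φ w * (Real.pi * I)) (by fun_prop) (fun a ha ↦ ?_) hp hq
  · simp [hφp, hφq] at hpq
  · rcases huv ha with h | h
    · simp [hφu h]
    · simp [hφv h, exp_neg]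

end Eilenberg

section AboveRay

open Complex Bornology

variable {s : ℝ → ℂ}

theorem isClosed_aboveRay (hs : ContinuousOn s (Icc 0 1)) : IsClosed (AboveRay s) :=
  (isCompact_Icc.image_of_continuousOn hs).isClosed.union
    (isometry_ofReal.isClosedEmbedding.isClosedMap _ isClosed_Ici)

theorem isPreconnected_aboveRay (hs : ContinuousOn s (Icc 0 1)) (hs1 : s 1 = 0) :
    IsPreconnected (AboveRay s) :=
  .union 0 ⟨1, by simp, hs1⟩ ⟨0, by simp, by simp⟩ (isPreconnected_Icc.image _ hs)
    (isPreconnected_Ici.image _ continuous_ofReal.continuousOn)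

theorem not_isBounded_aboveRay (s : ℝ → ℂ) : ¬ IsBounded (AboveRay s) := fun h ↦ by
  obtain ⟨r, hr, hsub⟩ := h.subset_ball_lt 0 0
  have hmem : (r : ℂ) ∈ AboveRay s := .inr ⟨r, hr.le, rfl⟩
  simpa [abs_of_pos hr] using hsub hmem

theorem eventually_exists_pos_of_aboveRay (hs : ContinuousOn s (Icc 0 1)) :
    ∀ᶠ w in cobounded ℂ ⊓ 𝓟 (AboveRay s), ∃ r : ℝ, 0 < r ∧ (r : ℂ) = w := by
  have hbdd : IsBounded (insert 0 (s '' Icc 0 1)) :=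
    (isCompact_Icc.image_of_continuousOn hs).isBounded.insert 0
  filter_upwards [mem_inf_of_left (isBounded_def.1 hbdd),
    mem_inf_of_right (mem_principal_self (AboveRay s))] with w hw hwR
  obtain ⟨r, hr, rfl⟩ := hwR.resolve_left fun h ↦ hw (.inr h)
  exact ⟨r, lt_of_le_of_ne hr fun h ↦ hw (.inl (by simp [← h])), rfl⟩

/-- To a point far to the left, the principal branch along the ray differs from the branch
normalized at infinity by `π i`, because the ray runs off along the cut of `w ↦ log (-w)`. -/
theorem isNormalizedLog_aboveRay (hs : ContinuousOn s (Icc 0 1)) {z : ℂ} (hz : z.re < 0)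
    (hzs : ∀ u ∈ Icc (0 : ℝ) 1, z.re < (s u).re) :
    IsNormalizedLog (AboveRay s) z fun w ↦ log (w - z) + Real.pi * I := by
  have hre : ∀ w ∈ AboveRay s, 0 < (w - z).re := by
    rintro w (⟨u, hu, rfl⟩ | ⟨r, hr, rfl⟩)
    · simpa using hzs u hu
    · simpa using hz.trans_le hr
  refine ⟨(ContinuousOn.clog (by fun_prop) fun w hw ↦ .inl (hre w hw)).add continuousOn_const,
    fun w hw ↦ ?_, ?_⟩
  · rw [exp_add, exp_log (slitPlane_ne_zero (.inl (hre w hw))), exp_pi_mul_I]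
    ring
  · refine ((tendsto_log_div_sub_cobounded z 0).mono_left inf_le_left).congr' ?_
    filter_upwards [eventually_exists_pos_of_aboveRay hs,
      mem_inf_of_right (mem_principal_self (AboveRay s))] with w hw hwR
    obtain ⟨r, hr, rfl⟩ := hw
    have hlog : log (-(r : ℂ)) = log r + Real.pi * I := by
      rw [log, log, norm_neg, arg_ofReal_of_nonneg hr.le, ← ofReal_neg,
        arg_ofReal_of_neg (neg_lt_zero.2 hr)]
      simp
    rw [zero_sub, ← neg_sub, neg_div_neg_eq, hlog, log_div_of_arg_sub_mem
      (slitPlane_ne_zero (.inl (hre _ hwR))) (ofReal_ne_zero.2 hr.ne')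
      (arg_sub_arg_mem_of_re_pos (hre _ hwR) hr)]
    ring

theorem AbovePath.exists_meeting_only_at_start {C D : Set ℂ} (h : AbovePath C D s)
    (hD : IsClosed D) : ∃ σ, AbovePath C D σ ∧ ∀ u ∈ Icc (0 : ℝ) 1, σ u ∈ D → σ u = σ 0 := by
  obtain ⟨hs, hsC, hs0, hs1⟩ := h
  obtain ⟨u₀, ⟨hu₀, hu₀D⟩, hmax⟩ :=
    (isCompact_Icc.of_isClosed_subset (hs.preimage_isClosed_of_isClosed isClosed_Icc hD)
      inter_subset_left).exists_isGreatest ⟨0, by simp, hs0⟩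
  have hmem : ∀ u ∈ Icc (0 : ℝ) 1, u₀ + (1 - u₀) * u ∈ Icc u₀ 1 := fun u hu ↦
    ⟨by nlinarith [hu₀.2, hu.1], by nlinarith [hu₀.2, hu.2]⟩
  have hmem' : ∀ u ∈ Icc (0 : ℝ) 1, u₀ + (1 - u₀) * u ∈ Icc (0 : ℝ) 1 := fun u hu ↦
    Icc_subset_Icc_left hu₀.1 (hmem u hu)
  refine ⟨fun u ↦ s (u₀ + (1 - u₀) * u), ⟨hs.comp (by fun_prop) hmem',
    fun u hu ↦ hsC _ (hmem' u hu), by simpa using hu₀D, by simpa using hs1⟩, fun u hu huD ↦ ?_⟩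
  have : u₀ + (1 - u₀) * u = u₀ := le_antisymm (hmax ⟨hmem' u hu, huD⟩) (hmem u hu).1
  simp [this]

end AboveRay

section LeftTail

open Complex Bornology

/-- The shape shared by all components of `X̂^t`: closed connected non-separating subsets of the
open left half-plane that are unbounded to the left. -/
structure IsLeftTail (C : Set ℂ) : Prop where
  isClosed : IsClosed C
  isPreconnected : IsPreconnected C
  isPreconnected_compl : IsPreconnected Cᶜ
  re_neg : ∀ z ∈ C, z.re < 0
  exists_re_lt : ∀ m : ℝ, ∃ z ∈ C, z.re < m

theorem isNormalizedLog_log_sub_of_re_lt {A : Set ℂ} {β : ℂ} (hA : ∀ w ∈ A, w.re < 0)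
    (hAβ : ∀ w ∈ A, w.re < β.re) : IsNormalizedLog A β fun w ↦ log (β - w) := by
  refine isNormalizedLog_log_sub (fun w hw ↦ .inl (by simpa using hAβ w hw)) ?_
  filter_upwards [mem_inf_of_right (mem_principal_self A)] with w hw
  exact arg_sub_arg_mem_of_re_pos (by simpa using hAβ w hw) (by simpa using hA w hw)

theorem IsNormalizedLog.exists_forall_eq_log_sub {A : Set ℂ} {β : ℂ} {Λ : ℂ → ℂ}
    (hΛ : IsNormalizedLog A β Λ) : ∃ m : ℝ, ∀ z ∈ A, z.re < m → Λ z = log (β - z) := by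
  set k := min 0 β.re
  have hlog : IsNormalizedLog (A ∩ {z | z.re < k}) β fun w ↦ log (β - w) :=
    isNormalizedLog_log_sub_of_re_lt (fun w hw ↦ hw.2.trans_le (min_le_left _ _))
      fun w hw ↦ hw.2.trans_le (min_le_right _ _)
  obtain ⟨r, -, hr⟩ := (hasBasis_cobounded_norm.inf_principal _).eventually_iff.1
    ((hΛ.mono inter_subset_left).eventuallyEq hlog)
  refine ⟨min k (-r), fun z hz hzm ↦ hr ⟨?_, hz, hzm.trans_le (min_le_left _ _)⟩⟩
  have := hzm.trans_le (min_le_right _ _)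
  exact (by linarith : r ≤ -z.re).trans ((neg_le_abs _).trans (abs_re_le_norm z))

namespace IsLeftTail

variable {C D : Set ℂ} {s : ℝ → ℂ} {z w z' w' : ℂ} {Λ M Λ' M' : ℂ → ℂ}

theorem not_isBounded (hC : IsLeftTail C) : ¬ IsBounded C := fun h ↦ by
  obtain ⟨r, -, hr⟩ := h.subset_ball_lt 0 0
  obtain ⟨z, hz, hzr⟩ := hC.exists_re_lt (-r)
  have := mem_ball_zero_iff.1 (hr hz)
  linarith [abs_re_le_norm z, neg_le_abs z.re]

theorem isPreconnected_frontier (hC : IsLeftTail C) : IsPreconnected (frontier C) :=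
  isPreconnected_frontier_of_isPreconnected_compl hC.isClosed hC.isPreconnected
    hC.isPreconnected_compl

theorem zero_notMem (hC : IsLeftTail C) : (0 : ℂ) ∉ C := fun h ↦ (hC.re_neg 0 h).ne rfl

theorem exists_isNormalizedLog (hD : IsLeftTail D) (hz : z ∉ D) : ∃ Λ, IsNormalizedLog D z Λ := by
  have hzero : IsNormalizedLog D 0 fun w ↦ log (0 - w) :=
    isNormalizedLog_log_sub_of_re_lt hD.re_neg hD.re_neg
  refine hzero.exists_of_mem_connectedComponentIn hD.isClosed ?_
  rwa [hD.isPreconnected_compl.connectedComponentIn hD.zero_notMem]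

theorem log_sub_log_eq (hC : IsLeftTail C) (hD : IsLeftTail D) (hCD : Disjoint C D)
    (hz : z ∈ C) (hw : w ∈ D) (hΛ : IsNormalizedLog D z Λ) (hM : IsNormalizedLog C w M)
    (hz' : z' ∈ C) (hw' : w' ∈ D) (hΛ' : IsNormalizedLog D z' Λ') (hM' : IsNormalizedLog C w' M') :
    Λ w - M z = Λ' w' - M' z' := by
  choose! 𝓛 h𝓛 using fun z (hz : z ∈ C) ↦ hD.exists_isNormalizedLog (disjoint_left.1 hCD hz)
  choose! 𝓜 h𝓜 using fun w (hw : w ∈ D) ↦ hC.exists_isNormalizedLog (disjoint_right.1 hCD hw)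
  have hcont : ContinuousOn (fun p : ℂ × ℂ ↦ 𝓛 p.1 p.2 - 𝓜 p.2 p.1) (C ×ˢ D) :=
    (IsNormalizedLog.continuousOn_prod hD.isClosed hD.isPreconnected hD.not_isBounded h𝓛).sub
      ((IsNormalizedLog.continuousOn_prod hC.isClosed hC.isPreconnected hC.not_isBounded h𝓜).comp
        continuous_swap.continuousOn fun p hp ↦ hp.symm)
  have hconst := eq_of_exp_comp_const (c := -1) (x := (z, w)) (y := (z', w'))
    (hC.isPreconnected.prod hD.isPreconnected) hcont (fun p hp ↦ ?_) ⟨hz, hw⟩ ⟨hz', hw'⟩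
  · have hL {z Λ} (hz : z ∈ C) := IsNormalizedLog.eqOn (Λ := 𝓛 z) (M := Λ) hD.isPreconnected
      hD.not_isBounded (h𝓛 z hz)
    have hN {w M} (hw : w ∈ D) := IsNormalizedLog.eqOn (Λ := 𝓜 w) (M := M) hC.isPreconnected
      hC.not_isBounded (h𝓜 w hw)
    simpa only [hL hz hΛ hw, hN hw hM hz, hL hz' hΛ' hw', hN hw' hM' hz'] using hconst
  · rw [exp_sub, (h𝓛 _ hp.1).exp_eq _ hp.2, (h𝓜 _ hp.2).exp_eq _ hp.1,
      div_eq_iff ((h𝓜 _ hp.2).sub_ne_zero hp.1)]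
    ring

theorem isPathConnected_re_nonpos_diff (hC : IsLeftTail C) :
    IsPathConnected ({z | z.re ≤ 0} \ C) := by
  have hpath : IsPathConnected Cᶜ :=
    hC.isClosed.isOpen_compl.isConnected_iff_isPathConnected.1
      ⟨⟨0, hC.zero_notMem⟩, hC.isPreconnected_compl⟩
  let ρ : ℂ → ℂ := fun z ↦ (min z.re 0 : ℝ) + z.im * I
  have hρ : ∀ z, z.re ≤ 0 → ρ z = z := fun z hz ↦ by simp [ρ, min_eq_left hz]
  convert hpath.image (f := ρ) (by fun_prop) using 1
  refine Subset.antisymm (fun z hz ↦ ⟨z, hz.2, hρ z hz.1⟩) ?_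
  rintro _ ⟨z, hz, rfl⟩
  refine ⟨by simp [ρ], ?_⟩
  rcases le_total z.re 0 with h | h
  · rwa [hρ z h]
  · exact fun hmem ↦ (hC.re_neg _ hmem).ne (by simp [ρ, min_eq_right h])

theorem exists_abovePath (hC : IsLeftTail C) (hD : IsLeftTail D) (hCD : Disjoint C D)
    (hw : w ∈ D) : ∃ s, AbovePath C D s := by
  obtain ⟨γ, hγ⟩ := hC.isPathConnected_re_nonpos_diff.joinedIn w
    ⟨(hD.re_neg w hw).le, disjoint_right.1 hCD hw⟩ 0 ⟨zero_re.le, hC.zero_notMem⟩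
  refine ⟨γ.extend, γ.continuous_extend.continuousOn, fun u hu ↦ ?_, by simpa, by simp⟩
  rw [γ.extend_apply hu]
  exact hγ _

theorem exists_far_left (hC : IsLeftTail C) (hCD : Disjoint C D)
    (hs : AbovePath C D s) : ∃ z ∈ C, ∃ M, IsNormalizedLog C (s 0) M ∧ M z = log (s 0 - z) ∧
      ∀ u ∈ Icc (0 : ℝ) 1, z.re < (s u).re := by
  obtain ⟨u₀, -, hmin⟩ := isCompact_Icc.exists_isMinOn (nonempty_Icc.2 zero_le_one)
    (continuous_re.comp_continuousOn hs.1)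
  obtain ⟨M, hM⟩ := hC.exists_isNormalizedLog (disjoint_right.1 hCD hs.2.2.1)
  obtain ⟨m, hm⟩ := hM.exists_forall_eq_log_sub
  obtain ⟨z, hz, hzm⟩ := hC.exists_re_lt (min m (s u₀).re)
  exact ⟨z, hz, M, hM, hm z hz (hzm.trans_le (min_le_left _ _)),
    fun u hu ↦ (hzm.trans_le (min_le_right _ _)).trans_le (hmin hu)⟩

theorem isNormalizedLog_union_aboveRay (hD : IsLeftTail D) (hs : AbovePath C D s) :
    IsNormalizedLog (D ∪ AboveRay s) (1 + 2 * Real.pi * I)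
      fun w ↦ log (1 + 2 * Real.pi * I - w) := by
  have hre : ∀ w ∈ D, 0 < (1 + 2 * Real.pi * I - w).re := fun w hw ↦ by
    simpa using (hD.re_neg w hw).trans one_pos
  refine isNormalizedLog_log_sub ?_ ?_
  · rintro w (hw | ⟨u, hu, rfl⟩ | ⟨r, -, rfl⟩)
    · exact .inl (hre w hw)
    · exact .inl (by simpa using (hs.2.1 u hu).1.trans_lt one_pos)
    · exact .inr (by simp [Real.pi_ne_zero])
  · rw [← sup_principal, inf_sup_left, eventually_sup]
    constructor
    · filter_upwards [mem_inf_of_right (mem_principal_self D)] with w hw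
      exact arg_sub_arg_mem_of_re_pos (hre w hw) (by simpa using hD.re_neg w hw)
    · filter_upwards [eventually_exists_pos_of_aboveRay hs.1] with w hw
      obtain ⟨r, hr, rfl⟩ := hw
      set b : ℂ := 1 + 2 * Real.pi * I - r
      have hb : 0 < b.im := by simp [b, Real.pi_pos]
      have hb' : arg b ≠ 0 := fun h ↦ hb.ne' (arg_eq_zero_iff.1 h).2
      rw [← ofReal_neg, arg_ofReal_of_neg (neg_lt_zero.2 hr)]
      constructor
      · linarith [(arg_nonneg_iff.2 hb.le).lt_of_ne' hb']
      · linarith [arg_le_pi b, Real.pi_pos]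

theorem eq_add_pi_mul_I_of_aboveVia (hD : IsLeftTail D) (hs : AbovePath C D s)
    (hvia : AboveVia C D s) (hz : z ∈ C) (hz0 : z.re < 0)
    (hzs : ∀ u ∈ Icc (0 : ℝ) 1, z.re < (s u).re) (hΛ : IsNormalizedLog D z Λ) :
    Λ (s 0) = log (s 0 - z) + Real.pi * I := by
  obtain ⟨N, hN⟩ := (hD.isNormalizedLog_union_aboveRay hs).exists_of_mem_connectedComponentIn
    (hD.isClosed.union (isClosed_aboveRay hs.1)) (hvia.2 hz)
  have hND := (hN.mono subset_union_left).eqOn hD.isPreconnected hD.not_isBounded hΛ hs.2.2.1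
  have hNR := (hN.mono subset_union_right).eqOn (isPreconnected_aboveRay hs.1 hs.2.2.2)
    (not_isBounded_aboveRay s) (isNormalizedLog_aboveRay hs.1 hz0 hzs) (.inl ⟨0, by simp, rfl⟩)
  exact hND.symm.trans hNR

theorem disjoint_union_aboveRay (hC : IsLeftTail C) (hCD : Disjoint C D)
    (hs : AbovePath C D s) : Disjoint C (D ∪ AboveRay s) := by
  rw [disjoint_left]
  rintro w hwC (hw | ⟨u, hu, rfl⟩ | ⟨r, hr, rfl⟩)
  · exact disjoint_left.1 hCD hwC hw
  · exact (hs.2.1 u hu).2 hwC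
  · exact (hC.re_neg _ hwC).not_ge (by simpa using hr)

theorem inter_aboveRay_subset (hD : IsLeftTail D)
    (hsD : ∀ u ∈ Icc (0 : ℝ) 1, s u ∈ D → s u = s 0) : D ∩ AboveRay s ⊆ {s 0} := by
  rintro w ⟨hwD, ⟨u, hu, rfl⟩ | ⟨r, hr, rfl⟩⟩
  · exact hsD u hu hwD
  · exact ((hD.re_neg _ hwD).not_ge (by simpa using hr)).elim

theorem aboveVia_of_eq_add_pi_mul_I (hC : IsLeftTail C) (hD : IsLeftTail D) (hCD : Disjoint C D)
    (hs : AbovePath C D s) (hsD : ∀ u ∈ Icc (0 : ℝ) 1, s u ∈ D → s u = s 0) (hz : z ∈ C)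
    (hzs : ∀ u ∈ Icc (0 : ℝ) 1, z.re < (s u).re) (hΛ : IsNormalizedLog D z Λ)
    (h : Λ (s 0) = log (s 0 - z) + Real.pi * I) : AboveVia C D s := by
  have hE := hD.isClosed.union (isClosed_aboveRay hs.1)
  obtain ⟨N, hN⟩ := hΛ.union hD.isClosed (isClosed_aboveRay hs.1)
    (isNormalizedLog_aboveRay hs.1 (hC.re_neg z hz) hzs) fun w hw ↦ by
      rw [hD.inter_aboveRay_subset hsD hw, h]
  have hmem := hN.mem_connectedComponentIn hE (hD.isNormalizedLog_union_aboveRay hs)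
  have hsub := hC.isPreconnected.subset_connectedComponentIn hz
    (hC.disjoint_union_aboveRay hCD hs).subset_compl_right
  rw [← connectedComponentIn_eq hmem] at hsub
  exact ⟨fun hb ↦ hC.not_isBounded (hb.subset hsub), hsub⟩

/-- Being above is detected by comparing the two natural branches of `log (z - w)` for `z ∈ C` and
`w ∈ D`: the one normalized at the end of `D` and the one normalized at the end of `C`. -/
theorem liesAbove_iff (hC : IsLeftTail C) (hD : IsLeftTail D) (hCD : Disjoint C D)
    (hz : z ∈ C) (hw : w ∈ D) (hΛ : IsNormalizedLog D z Λ) (hM : IsNormalizedLog C w M) :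
    LiesAbove C D ↔ Λ w = M z + Real.pi * I := by
  have hfar {s} (hs : AbovePath C D s) : ∃ z' ∈ C, ∃ Λ', IsNormalizedLog D z' Λ' ∧
      (∀ u ∈ Icc (0 : ℝ) 1, z'.re < (s u).re) ∧
      (Λ' (s 0) = log (s 0 - z') + Real.pi * I ↔ Λ w = M z + Real.pi * I) := by
    obtain ⟨z', hz', M', hM', hMz', hzs⟩ := hC.exists_far_left hCD hs
    obtain ⟨Λ', hΛ'⟩ := hD.exists_isNormalizedLog (disjoint_left.1 hCD hz')
    refine ⟨z', hz', Λ', hΛ', hzs, ?_⟩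
    rw [← hMz', ← sub_eq_iff_eq_add', ← sub_eq_iff_eq_add',
      hC.log_sub_log_eq hD hCD hz hw hΛ hM hz' hs.2.2.1 hΛ' hM']
  constructor
  · rintro ⟨s, hs, hvia⟩
    obtain ⟨z', hz', Λ', hΛ', hzs, hiff⟩ := hfar hs
    exact hiff.1 (hD.eq_add_pi_mul_I_of_aboveVia hs hvia hz' (hC.re_neg z' hz') hzs hΛ')
  · intro h
    obtain ⟨s₀, hs₀⟩ := hC.exists_abovePath hD hCD hw
    obtain ⟨s, hs, hsD⟩ := hs₀.exists_meeting_only_at_start hD.isClosed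
    obtain ⟨z', hz', Λ', hΛ', hzs, hiff⟩ := hfar hs
    exact ⟨s, hs, hC.aboveVia_of_eq_add_pi_mul_I hD hCD hs hsD hz' hzs hΛ' (hiff.2 h)⟩

end IsLeftTail

end LeftTail
section ExpLift

open Complex Bornology

variable {X Y K : Set ℂ}

theorem re_neg_of_exp_mem (hYb : Y ⊆ ball 0 1) {z : ℂ} (hz : exp z ∈ Y) : z.re < 0 := by
  simpa [norm_exp] using hYb hz

theorem frontier_preimage_exp (Y : Set ℂ) : frontier (exp ⁻¹' Y) = exp ⁻¹' frontier Y :=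
  (isOpenMap_exp.preimage_frontier_eq_frontier_preimage continuous_exp Y).symm

theorem isPreconnected_compl_preimage_exp (hY : IsClosed Y) (h0 : (0 : ℂ) ∈ Y)
    (hYb : Y ⊆ ball 0 1) (hYc : IsPreconnected Yᶜ) : IsPreconnected (exp ⁻¹' Y)ᶜ := by
  have h1 : (1 : ℂ) ∈ Yᶜ := fun h ↦ by simpa using hYb h
  have hpath : IsPathConnected Yᶜ :=
    hY.isOpen_compl.isConnected_iff_isPathConnected.1 ⟨⟨1, h1⟩, hYc⟩
  have hhalf : {z : ℂ | 0 ≤ z.re} ⊆ (exp ⁻¹' Y)ᶜ := fun z hz hzY ↦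
    (re_neg_of_exp_mem hYb hzY).not_ge hz
  refine isPreconnected_of_forall 0 fun z hz ↦ ?_
  obtain ⟨γ, hγ⟩ := hpath.joinedIn (exp z) hz 1 h1
  have hγY : ∀ u, γ.extend u ∉ Y := fun u ↦ hγ (projIcc 0 1 zero_le_one u)
  obtain ⟨g, hg, hg0, hge⟩ := exists_continuous_log γ.continuous_extend
    (fun u h ↦ hγY u (h ▸ h0)) (a := 0) (c := z) γ.extend_zero.symm
  have hg1 : 0 ≤ (g 1).re := by
    rw [← Real.one_le_exp_iff, ← norm_exp, hge, γ.extend_one, norm_one]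
  refine ⟨range g ∪ {z | 0 ≤ z.re}, union_subset ?_ hhalf, .inr (by simp), .inl ⟨0, hg0⟩,
    .union (g 1) (mem_range_self 1) hg1 (isPreconnected_range hg)
      (convex_halfSpace_re_ge 0).isPreconnected⟩
  rintro _ ⟨u, rfl⟩
  simpa [hge u] using hγY u

theorem subset_image_exp_connectedComponentIn (hK : IsPreconnected K) (hKY : K ⊆ Y) {ℓ : ℂ → ℂ}
    (hℓ : ContinuousOn ℓ K) (hexp : ∀ w ∈ K, exp (ℓ w) = w) {c : ℂ} (hc : exp c ∈ K) :
    K ⊆ exp '' connectedComponentIn (exp ⁻¹' Y) c := by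
  have hlift : ∀ w ∈ K, exp (ℓ w - ℓ (exp c) + c) = w := fun w hw ↦ by
    rw [exp_add, exp_sub, hexp w hw, hexp _ hc, div_mul_cancel₀ _ (exp_ne_zero c)]
  have himg : (fun w ↦ ℓ w - ℓ (exp c) + c) '' K ⊆ connectedComponentIn (exp ⁻¹' Y) c := by
    refine (hK.image _ (by fun_prop)).subset_connectedComponentIn ⟨exp c, hc, by simp⟩ ?_
    rintro _ ⟨w, hw, rfl⟩
    simpa [hlift w hw] using hKY hw
  exact fun w hw ↦ ⟨_, himg ⟨w, hw, rfl⟩, hlift w hw⟩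

theorem exists_re_lt_connectedComponentIn_preimage_exp (hX : IsCompact X) (hXc : IsPreconnected X)
    (hXns : IsPreconnected Xᶜ) (h0 : (0 : ℂ) ∈ frontier X) (hXb : X ⊆ ball 0 1) {c : ℂ}
    (hc : exp c ∈ X) (m : ℝ) : ∃ z ∈ connectedComponentIn (exp ⁻¹' X) c, z.re < m := by
  by_contra! hcon
  set C := connectedComponentIn (exp ⁻¹' X) c
  have hnorm : ∀ z ∈ C, Real.exp m / 2 < ‖exp z‖ := fun z hz ↦ by
    rw [norm_exp]
    linarith [Real.exp_le_exp.2 (hcon z hz), Real.exp_pos m]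
  set F := {w : ℂ | Real.exp m / 2 ≤ ‖w‖}
  have h0F : (0 : ℂ) ∉ F := fun h ↦ (half_pos (Real.exp_pos m)).not_ge (by simpa [F] using h)
  have hF : IsClosed F := isClosed_le continuous_const continuous_norm
  have hcF : exp c ∈ X ∩ F := ⟨hc, (hnorm c (mem_connectedComponentIn hc)).le⟩
  obtain ⟨ℓ, hℓ, hexp⟩ := (mem_connectedComponentIn_compl_iff_exists_log (hX.inter_right hF)
    (q := 1) fun w hw ↦ (re_le_norm w).trans_lt (by simpa using hXb hw.1)).1
    (mem_connectedComponentIn_compl_of_mem_frontier hXns h0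
      (fun h ↦ by simpa using hXb h) inter_subset_left fun h ↦ h0F h.2)
  have hsub := connectedComponentIn_subset (X ∩ F) (exp c)
  refine not_connectedComponentIn_inter_subset_interior hX hXc hF
    (fun h ↦ h0F (h (hX.isClosed.frontier_subset h0))) hcF fun w hw ↦ ?_
  obtain ⟨z, hz, rfl⟩ := subset_image_exp_connectedComponentIn isPreconnected_connectedComponentIn
    (hsub.trans inter_subset_left) (ℓ := fun w ↦ ℓ w + Real.pi * I)
    ((hℓ.mono hsub).add continuousOn_const)
    (fun w hw ↦ by rw [exp_add, hexp w (hsub hw), exp_pi_mul_I]; ring)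
    (mem_connectedComponentIn hcF) hw
  exact mem_interior.2 ⟨{w | Real.exp m / 2 < ‖w‖}, fun w (hw : _ < ‖w‖) ↦ hw.le,
    isOpen_lt continuous_const continuous_norm, hnorm z hz⟩

theorem exists_re_lt_frontier_connectedComponentIn_preimage_exp (hX : IsCompact X)
    (hXc : IsPreconnected X) (hXns : IsPreconnected Xᶜ) (h0 : (0 : ℂ) ∈ frontier X)
    (hXb : X ⊆ ball 0 1) {c : ℂ} (hc : exp c ∈ X) (m : ℝ) :
    ∃ z ∈ frontier (connectedComponentIn (exp ⁻¹' X) c), z.re < m := by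
  by_contra! hcon
  obtain ⟨z, hz, hzm⟩ := exists_re_lt_connectedComponentIn_preimage_exp hX hXc hXns h0 hXb hc m
  have hhalf : {z : ℂ | z.re < m} ⊆ connectedComponentIn (exp ⁻¹' X) c :=
    subset_of_isPreconnected_of_disjoint_frontier (convex_halfSpace_re_lt m).isPreconnected
      (disjoint_left.2 fun w hw hw' ↦ (hcon w hw').not_gt hw) ⟨z, hzm, hz⟩
  obtain ⟨w, hw, hwm⟩ := Metric.mem_closure_iff.1
    (frontier_subset_closure (by rwa [frontier_compl] : (0 : ℂ) ∈ frontier Xᶜ)) _ (Real.exp_pos m)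
  have hw0 : w ≠ 0 := fun h ↦ hw (h ▸ hX.isClosed.frontier_subset h0)
  have hlog : (log w).re < m := by
    rwa [log_re, Real.log_lt_iff_lt_exp (norm_pos_iff.2 hw0), ← dist_zero_left]
  exact hw (by simpa [exp_log hw0] using connectedComponentIn_subset _ _ (hhalf hlog))

theorem isLeftTail_connectedComponentIn_preimage_exp (hY : IsClosed Y) (h0 : (0 : ℂ) ∈ Y)
    (hYb : Y ⊆ ball 0 1) (hYc : IsPreconnected Yᶜ) {x : ℂ}
    (hl : ∀ m : ℝ, ∃ z ∈ connectedComponentIn (exp ⁻¹' Y) x, z.re < m) :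
    IsLeftTail (connectedComponentIn (exp ⁻¹' Y) x) where
  isClosed := isClosed_connectedComponentIn (hY.preimage continuous_exp) x
  isPreconnected := isPreconnected_connectedComponentIn
  isPreconnected_compl := isPreconnected_compl_connectedComponentIn (hY.preimage continuous_exp)
    ⟨0, fun h ↦ (re_neg_of_exp_mem hYb h).ne rfl⟩
    (isPreconnected_compl_preimage_exp hY h0 hYb hYc) x
  re_neg _ hz := re_neg_of_exp_mem hYb (connectedComponentIn_subset (exp ⁻¹' Y) x hz)
  exists_re_lt := hl

theorem isPreconnected_setOf_one_le_norm : IsPreconnected {w : ℂ | 1 ≤ ‖w‖} := by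
  convert (convex_halfSpace_re_ge 0).isPreconnected.image exp continuous_exp.continuousOn using 1
  ext w
  constructor
  · intro hw
    have hw0 : 0 < ‖w‖ := one_pos.trans_le hw
    exact ⟨log w, by simpa [log_re] using Real.log_nonneg hw, exp_log (norm_pos_iff.1 hw0)⟩
  · rintro ⟨z, hz, rfl⟩
    simpa [norm_exp] using hz

theorem unbddComp_eq_connectedComponentIn (hK : K ⊆ ball 0 1) :
    unbddComp K = connectedComponentIn Kᶜ 1 := by
  have hT : {w : ℂ | 1 ≤ ‖w‖} ⊆ connectedComponentIn Kᶜ 1 :=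
    isPreconnected_setOf_one_le_norm.subset_connectedComponentIn (by simp)
      fun w hw hwK ↦ (mem_ball_zero_iff.1 (hK hwK)).not_ge hw
  ext z
  constructor
  · rintro ⟨hz, hunb⟩
    obtain ⟨w, hw, hw1⟩ := not_subset.1 fun h : _ ⊆ ball (0 : ℂ) 1 ↦ hunb (isBounded_ball.subset h)
    rw [connectedComponentIn_eq (hT (by simpa using hw1)), ← connectedComponentIn_eq hw]
    exact mem_connectedComponentIn hz
  · refine fun hz ↦ ⟨connectedComponentIn_subset _ _ hz, fun hb ↦ ?_⟩
    rw [← connectedComponentIn_eq hz] at hb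
    obtain ⟨r, hr, hsub⟩ := hb.subset_ball_lt 1 0
    have hrT : (r : ℂ) ∈ {w : ℂ | 1 ≤ ‖w‖} := by simpa using hr.le.trans (le_abs_self r)
    exact (le_abs_self r).not_gt (by simpa using hsub (hT hrT))

end ExpLift
section Isotopy

open Complex Bornology

theorem exists_continuousOn_comp_eq {α β γ : Type*} [TopologicalSpace α] [Nonempty α]
    [TopologicalSpace β] [T2Space β] [TopologicalSpace γ] {S : Set α} {f : α → β} {g : α → γ}
    (hS : IsCompact S) (hf : ContinuousOn f S) (hinj : InjOn f S) (hg : ContinuousOn g S) :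
    ∃ k : β → γ, ContinuousOn k (f '' S) ∧ ∀ x ∈ S, k (f x) = g x := by
  have hk : ∀ x ∈ S, g (Function.invFunOn f S (f x)) = g x := fun x hx ↦ by
    rw [hinj.leftInvOn_invFunOn hx]
  refine ⟨g ∘ Function.invFunOn f S, continuousOn_iff_isClosed.2 fun T hT ↦ ?_, hk⟩
  obtain ⟨u, hu, huT⟩ := continuousOn_iff_isClosed.1 hg T hT
  refine ⟨f '' (S ∩ u), ((hS.inter_right hu).image_of_continuousOn
    (hf.mono inter_subset_left)).isClosed, ?_⟩
  have hiff : ∀ x ∈ S, g x ∈ T ↔ x ∈ u := fun x hx ↦ by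
    simpa [hx] using Set.ext_iff.1 huT x
  ext v
  constructor
  · rintro ⟨hv, x, hx, rfl⟩
    exact ⟨⟨x, ⟨hx, (hiff x hx).1 (hk x hx ▸ hv)⟩, rfl⟩, x, hx, rfl⟩
  · rintro ⟨⟨x, ⟨hx, hxu⟩, rfl⟩, hv⟩
    exact ⟨by simpa [hk x hx] using (hiff x hx).2 hxu, hv⟩

theorem isotopy_mem_connectedComponentIn_compl {h : ℂ → ℝ → ℂ} {K S : Set ℂ} {p q : ℂ} {t : ℝ}
    (hh : ContinuousOn (fun p : ℂ × ℝ ↦ h p.1 p.2) (K ×ˢ Icc 0 1))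
    (hinj : ∀ t ∈ Icc (0 : ℝ) 1, InjOn (fun z ↦ h z t) K) (hid : ∀ z ∈ K, h z 0 = z)
    (hre : ∀ t ∈ Icc (0 : ℝ) 1, ∀ z ∈ K, (h z t).re < q.re) (hS : IsCompact S) (hSK : S ⊆ K)
    (hp : p ∈ K) (hpS : p ∉ S) (hpq : p ∈ connectedComponentIn Sᶜ q) (ht : t ∈ Icc (0 : ℝ) 1) :
    h p t ∈ connectedComponentIn ((fun z ↦ h z t) '' S)ᶜ q := by
  have h0 : (0 : ℝ) ∈ Icc (0 : ℝ) 1 := by simp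
  have hht : ContinuousOn (fun z ↦ h z t) S := (hh.uncurry_right t ht).mono hSK
  obtain ⟨ℓ, hℓ, hℓe⟩ := (mem_connectedComponentIn_compl_iff_exists_log hS
    fun w hw ↦ by simpa [hid w (hSK hw)] using hre 0 h0 w (hSK hw)).1 hpq
  obtain ⟨G, hG, hGe, -⟩ := exists_homotopy_log (S := S) (F := fun w s ↦ h p s - h w s)
    (((hh.uncurry_left p hp).comp continuousOn_snd fun _ hx ↦ hx.2).sub
      (hh.mono (prod_mono_left hSK)))
    (fun w hw s hs heq ↦ hpS (hinj s hs hp (hSK hw) (sub_eq_zero.1 heq) ▸ hw)) hℓ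
    (fun w hw ↦ by rw [hℓe w hw, hid p hp, hid w (hSK hw)])
  obtain ⟨k, hk, hkG⟩ := exists_continuousOn_comp_eq hS hht ((hinj t ht).mono hSK)
    (hG.uncurry_right t ht)
  refine (mem_connectedComponentIn_compl_iff_exists_log (hS.image_of_continuousOn hht) ?_).2
    ⟨k, hk, ?_⟩
  · rintro _ ⟨w, hw, rfl⟩
    exact hre t ht w (hSK hw)
  · rintro _ ⟨w, hw, rfl⟩
    rw [hkG w hw, hGe w hw t ht]

/-- The standing setup: an isotopy `h` of the boundary of a non-separating continuum `X` that
starts at the identity, fixes `0 ∈ Bd X` and keeps all `X^t` inside the unit disk. -/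
structure BoundaryIsotopy (X : Set ℂ) (h : ℂ → ℝ → ℂ) : Prop where
  isCompact : IsCompact X
  isPreconnected : IsPreconnected X
  isPreconnected_compl : IsPreconnected Xᶜ
  zero_mem_frontier : (0 : ℂ) ∈ frontier X
  subset_ball : X ⊆ ball 0 1
  continuousOn : ContinuousOn (fun p : ℂ × ℝ ↦ h p.1 p.2) (frontier X ×ˢ Icc 0 1)
  injOn : ∀ t ∈ Icc (0 : ℝ) 1, InjOn (fun z ↦ h z t) (frontier X)
  map_zero_right : ∀ z ∈ frontier X, h z 0 = z
  map_zero_left : ∀ t ∈ Icc (0 : ℝ) 1, h 0 t = 0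
  XtSet_subset_ball : ∀ t ∈ Icc (0 : ℝ) 1, XtSet h X t ⊆ ball 0 1

namespace BoundaryIsotopy

variable {X : Set ℂ} {h : ℂ → ℝ → ℂ} {t : ℝ}

theorem frontier_subset (hI : BoundaryIsotopy X h) : frontier X ⊆ X :=
  hI.isCompact.isClosed.frontier_subset

theorem isCompact_frontier (hI : BoundaryIsotopy X h) : IsCompact (frontier X) :=
  hI.isCompact.of_isClosed_subset isClosed_frontier hI.frontier_subset

theorem isClosed_image (hI : BoundaryIsotopy X h) (ht : t ∈ Icc (0 : ℝ) 1) :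
    IsClosed ((fun z ↦ h z t) '' frontier X) :=
  (hI.isCompact_frontier.image_of_continuousOn (hI.continuousOn.uncurry_right t ht)).isClosed

theorem image_subset_XtSet : (fun z ↦ h z t) '' frontier X ⊆ XtSet h X t :=
  fun _ hw hwU ↦ hwU.1 hw

theorem compl_XtSet (hI : BoundaryIsotopy X h) (ht : t ∈ Icc (0 : ℝ) 1) :
    (XtSet h X t)ᶜ = connectedComponentIn ((fun z ↦ h z t) '' frontier X)ᶜ 1 := by
  rw [XtSet, compl_compl, unbddComp_eq_connectedComponentIn
    (image_subset_XtSet.trans (hI.XtSet_subset_ball t ht))]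

theorem isClosed_XtSet (hI : BoundaryIsotopy X h) (ht : t ∈ Icc (0 : ℝ) 1) :
    IsClosed (XtSet h X t) :=
  isOpen_compl_iff.1 (hI.compl_XtSet ht ▸ (hI.isClosed_image ht).isOpen_compl.connectedComponentIn)

theorem zero_mem_XtSet (hI : BoundaryIsotopy X h) (ht : t ∈ Icc (0 : ℝ) 1) :
    (0 : ℂ) ∈ XtSet h X t :=
  image_subset_XtSet ⟨0, hI.zero_mem_frontier, hI.map_zero_left t ht⟩

theorem isPreconnected_compl_XtSet (hI : BoundaryIsotopy X h) (ht : t ∈ Icc (0 : ℝ) 1) :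
    IsPreconnected (XtSet h X t)ᶜ :=
  hI.compl_XtSet ht ▸ isPreconnected_connectedComponentIn

theorem norm_lt_one (hI : BoundaryIsotopy X h) (ht : t ∈ Icc (0 : ℝ) 1) {z : ℂ}
    (hz : z ∈ frontier X) : ‖h z t‖ < 1 :=
  mem_ball_zero_iff.1 (hI.XtSet_subset_ball t ht (image_subset_XtSet ⟨z, hz, rfl⟩))

theorem mem_connectedComponentIn_compl_image (hI : BoundaryIsotopy X h) (ht : t ∈ Icc (0 : ℝ) 1)
    {S : Set ℂ} {p : ℂ} (hS : IsCompact S) (hSX : S ⊆ frontier X) (hp : p ∈ frontier X)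
    (hpS : p ∉ S) : h p t ∈ connectedComponentIn ((fun z ↦ h z t) '' S)ᶜ 1 :=
  isotopy_mem_connectedComponentIn_compl hI.continuousOn hI.injOn hI.map_zero_right
    (fun _ hs _ hz ↦ (re_le_norm _).trans_lt (hI.norm_lt_one hs hz)) hS hSX hp hpS
    (mem_connectedComponentIn_compl_of_mem_frontier hI.isPreconnected_compl hp
      (fun h1 ↦ by simpa using hI.subset_ball h1) (hSX.trans hI.frontier_subset) hpS) ht

theorem frontier_XtSet_subset (hI : BoundaryIsotopy X h) (ht : t ∈ Icc (0 : ℝ) 1) :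
    frontier (XtSet h X t) ⊆ (fun z ↦ h z t) '' frontier X := by
  rw [← frontier_compl, hI.compl_XtSet ht]
  refine (frontier_connectedComponentIn_subset _ _).trans ?_
  rw [frontier_compl]
  exact (hI.isClosed_image ht).frontier_subset

/-- If a neighbourhood of `h^t p` missed `U^t`, then discarding the part of `Bd X` near `p` would
not change `U^t`; but afterwards `h^t p` lies in the unbounded component. -/
theorem mem_closure_compl_XtSet (hI : BoundaryIsotopy X h) (ht : t ∈ Icc (0 : ℝ) 1) {p : ℂ}
    (hp : p ∈ frontier X) : h p t ∈ closure (XtSet h X t)ᶜ := by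
  by_contra hcon
  obtain ⟨O, hO, hpO⟩ := mem_nhdsWithin_iff_exists_mem_nhds_inter.1
    ((hI.continuousOn.uncurry_right t ht) p hp (isClosed_closure.isOpen_compl.mem_nhds hcon))
  obtain ⟨ε, hε, hεO⟩ := Metric.mem_nhds_iff.1 hO
  have hnear : ∀ w ∈ frontier X, w ∈ ball p ε → h w t ∉ closure (XtSet h X t)ᶜ :=
    fun w hw hwp ↦ hpO ⟨hεO hwp, hw⟩
  set S := frontier X \ ball p ε
  have hpV := hI.mem_connectedComponentIn_compl_image ht (S := S)
    (hI.isCompact_frontier.diff isOpen_ball) sdiff_subset hp fun hpS ↦ hpS.2 (mem_ball_self hε)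
  set V := connectedComponentIn ((fun z ↦ h z t) '' S)ᶜ 1
  have hVU : V ⊆ (XtSet h X t)ᶜ := by
    refine subset_of_isPreconnected_of_disjoint_frontier isPreconnected_connectedComponentIn
      (disjoint_right.2 fun v hv hvV ↦ ?_)
      ⟨1, mem_connectedComponentIn (connectedComponentIn_nonempty_iff.1 ⟨_, hpV⟩),
        fun h1 ↦ by simpa using hI.XtSet_subset_ball t ht h1⟩
    obtain ⟨w, hw, rfl⟩ := hI.frontier_XtSet_subset ht (by rwa [← frontier_compl])
    exact connectedComponentIn_subset _ _ hvV
      ⟨w, ⟨hw, fun hwp ↦ hnear w hw hwp (frontier_subset_closure hv)⟩, rfl⟩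
  exact hVU hpV (image_subset_XtSet ⟨p, hp, rfl⟩)

theorem frontier_XtSet (hI : BoundaryIsotopy X h) (ht : t ∈ Icc (0 : ℝ) 1) :
    frontier (XtSet h X t) = (fun z ↦ h z t) '' frontier X := by
  refine (hI.frontier_XtSet_subset ht).antisymm ?_
  rintro _ ⟨p, hp, rfl⟩
  rw [frontier_eq_closure_inter_closure]
  exact ⟨subset_closure (image_subset_XtSet ⟨p, hp, rfl⟩), hI.mem_closure_compl_XtSet ht hp⟩

theorem map_ne_zero (hI : BoundaryIsotopy X h) (ht : t ∈ Icc (0 : ℝ) 1) {z : ℂ}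
    (hz : z ∈ frontier X) (hz0 : z ≠ 0) : h z t ≠ 0 := fun h0 ↦
  hz0 (hI.injOn t ht hz hI.zero_mem_frontier (h0.trans (hI.map_zero_left t ht).symm))

theorem exists_forall_norm_lt (hI : BoundaryIsotopy X h) {ε : ℝ} (hε : 0 < ε) :
    ∃ δ > 0, ∀ z ∈ frontier X, ‖z‖ < δ → ∀ t ∈ Icc (0 : ℝ) 1, ‖h z t‖ < ε := by
  obtain ⟨δ, hδ, hδε⟩ := Metric.uniformContinuousOn_iff.1 ((hI.isCompact_frontier.prod
    isCompact_Icc).uniformContinuousOn_of_continuous hI.continuousOn) ε hε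
  refine ⟨δ, hδ, fun z hz hzδ t ht ↦ ?_⟩
  simpa [hI.map_zero_left t ht] using hδε (z, t) ⟨hz, ht⟩ (0, t) ⟨hI.zero_mem_frontier, ht⟩
    (by simpa [Prod.dist_eq, hδ] using hzδ)

end BoundaryIsotopy

theorem hatSet_eq (X : Set ℂ) : hatSet X = exp ⁻¹' X := by
  ext
  simp [hatSet]

theorem mem_bdLift {X : Set ℂ} {z : ℂ} : z ∈ bdLift X ↔ exp z ∈ frontier X := by
  simp [bdLift]

theorem frontier_hatSet (X : Set ℂ) : frontier (hatSet X) = bdLift X := by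
  rw [hatSet_eq, frontier_preimage_exp]
  ext
  exact mem_bdLift.symm

theorem isClosed_hatSet {X : Set ℂ} (hX : IsClosed X) : IsClosed (hatSet X) :=
  hatSet_eq X ▸ hX.preimage continuous_exp

theorem bdLift_subset_hatSet {X : Set ℂ} (hX : IsClosed X) : bdLift X ⊆ hatSet X :=
  frontier_hatSet X ▸ (isClosed_hatSet hX).frontier_subset

theorem frontier_connectedComponentIn_hatSet_subset (X : Set ℂ) (x : ℂ) :
    frontier (connectedComponentIn (hatSet X) x) ⊆ bdLift X :=
  frontier_hatSet X ▸ frontier_connectedComponentIn_subset (hatSet X) x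

theorem mem_frontier_connectedComponentIn_hatSet {X : Set ℂ} (hX : IsClosed X) {x : ℂ}
    (hx : x ∈ bdLift X) : x ∈ frontier (connectedComponentIn (hatSet X) x) :=
  mem_frontier_connectedComponentIn (isClosed_hatSet hX) (by rwa [frontier_hatSet])

/-- A `BoundaryIsotopy` together with its lift `H`, written `𝐡` in the paper, to
`exp⁻¹(Bd X \ {0})` that starts at the identity. -/
structure LiftedIsotopy (X : Set ℂ) (h H : ℂ → ℝ → ℂ) : Prop extends BoundaryIsotopy X h where
  continuousOn_lift : ContinuousOn (fun p : ℂ × ℝ ↦ H p.1 p.2) (bdLift X ×ˢ Icc 0 1)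
  lift_zero : ∀ z ∈ bdLift X, H z 0 = z
  exp_lift : ∀ z ∈ bdLift X, ∀ t ∈ Icc (0 : ℝ) 1, exp (H z t) = h (exp z) t

namespace LiftedIsotopy

variable {X : Set ℂ} {h H : ℂ → ℝ → ℂ} {t : ℝ} {x y z : ℂ}

theorem mem_bdLift_XtSet (hL : LiftedIsotopy X h H) (ht : t ∈ Icc (0 : ℝ) 1) {v : ℂ} :
    v ∈ bdLift (XtSet h X t) ↔ ∃ w ∈ frontier X, h w t = exp v := by
  rw [mem_bdLift, hL.frontier_XtSet ht, mem_image]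

theorem lift_mem_bdLift (hL : LiftedIsotopy X h H) (ht : t ∈ Icc (0 : ℝ) 1) (hz : z ∈ bdLift X) :
    H z t ∈ bdLift (XtSet h X t) :=
  (hL.mem_bdLift_XtSet ht).2 ⟨exp z, mem_bdLift.1 hz, (hL.exp_lift z hz t ht).symm⟩

theorem exists_forall_re_lt (hL : LiftedIsotopy X h H) (m : ℝ) :
    ∃ m', ∀ z ∈ bdLift X, z.re < m' → ∀ t ∈ Icc (0 : ℝ) 1, (H z t).re < m := by
  obtain ⟨δ, hδ, hδm⟩ := hL.exists_forall_norm_lt (Real.exp_pos m)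
  refine ⟨Real.log δ, fun z hz hzδ t ht ↦ ?_⟩
  rw [← Real.exp_lt_exp, ← norm_exp, hL.exp_lift z hz t ht]
  exact hδm _ (mem_bdLift.1 hz) (by rwa [norm_exp, ← Real.lt_log_iff_exp_lt hδ]) t ht

/-- Running the isotopy backwards from time `t` and lifting it through `exp` inverts `H · t`. -/
theorem exists_leftInvOn_lift (hL : LiftedIsotopy X h H) (ht : t ∈ Icc (0 : ℝ) 1) :
    ∃ J : ℂ → ℂ, ContinuousOn J (bdLift (XtSet h X t)) ∧
      MapsTo J (bdLift (XtSet h X t)) (bdLift X) ∧ LeftInvOn J (fun z ↦ H z t) (bdLift X) := by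
  obtain ⟨k, hk, hkh⟩ := exists_continuousOn_comp_eq hL.isCompact_frontier
    (hL.continuousOn.uncurry_right t ht) (hL.injOn t ht) continuousOn_id
  have hrev : MapsTo (fun s ↦ t * (1 - s)) (Icc (0 : ℝ) 1) (Icc 0 1) := fun s hs ↦
    ⟨mul_nonneg ht.1 (sub_nonneg.2 hs.2), mul_le_one₀ ht.2 (sub_nonneg.2 hs.2) (by linarith [hs.1])⟩
  have hkmem : ∀ v ∈ bdLift (XtSet h X t), k (exp v) ∈ frontier X ∧ h (k (exp v)) t = exp v := by
    intro v hv
    obtain ⟨w, hw, hwv⟩ := (hL.mem_bdLift_XtSet ht).1 hv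
    rw [← hwv, hkh w hw]
    exact ⟨hw, rfl⟩
  have hkexp : ContinuousOn (fun v ↦ k (exp v)) (bdLift (XtSet h X t)) :=
    hk.comp continuous_exp.continuousOn fun v hv ↦ (hL.mem_bdLift_XtSet ht).1 hv
  obtain ⟨G, hG, hGe, hG0⟩ := exists_homotopy_log (S := bdLift (XtSet h X t))
    (F := fun v s ↦ h (k (exp v)) (t * (1 - s))) (g := id)
    (hL.continuousOn.comp ((hkexp.comp continuousOn_fst fun _ hp ↦ hp.1).prodMk (by fun_prop))
      fun p hp ↦ ⟨(hkmem p.1 hp.1).1, hrev hp.2⟩)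
    (fun v hv s hs ↦ hL.map_ne_zero (hrev hs) (hkmem v hv).1 fun h0 ↦
      exp_ne_zero v (by rw [← (hkmem v hv).2, h0, hL.map_zero_left t ht]))
    continuousOn_id (fun v hv ↦ by simp [(hkmem v hv).2])
  have h0 : (0 : ℝ) ∈ Icc (0 : ℝ) 1 := by simp
  have h1 : (1 : ℝ) ∈ Icc (0 : ℝ) 1 := by simp
  refine ⟨fun v ↦ G v 1, hG.uncurry_right 1 h1, fun v hv ↦ mem_bdLift.2 ?_, fun z hz ↦ ?_⟩
  · simpa [hGe v hv 1 h1, hL.map_zero_right _ (hkmem v hv).1] using (hkmem v hv).1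
  · have hv := hL.lift_mem_bdLift ht hz
    have hconst := sub_eq_sub_of_exp_eq (g := fun s ↦ H z (t * (1 - s))) isPreconnected_Icc
      (hG.uncurry_left _ hv) ((hL.continuousOn_lift.uncurry_left z hz).comp (by fun_prop) hrev)
      (fun s hs ↦ by
        rw [hGe _ hv s hs, hL.exp_lift z hz _ (hrev hs), hL.exp_lift z hz t ht,
          hkh _ (mem_bdLift.1 hz), id]) h1 h0
    simpa [hG0 _ hv, hL.lift_zero z hz, sub_eq_zero] using hconst

theorem exists_re_lt_frontier_connectedComponentIn (hL : LiftedIsotopy X h H) (hx : x ∈ bdLift X)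
    (m : ℝ) : ∃ z ∈ frontier (connectedComponentIn (hatSet X) x), z.re < m :=
  hatSet_eq X ▸ exists_re_lt_frontier_connectedComponentIn_preimage_exp hL.isCompact
    hL.isPreconnected hL.isPreconnected_compl hL.zero_mem_frontier hL.subset_ball
    (hL.frontier_subset (mem_bdLift.1 hx)) m

theorem isLeftTail_connectedComponentIn (hL : LiftedIsotopy X h H) (hx : x ∈ bdLift X) :
    IsLeftTail (connectedComponentIn (hatSet X) x) :=
  hatSet_eq X ▸ isLeftTail_connectedComponentIn_preimage_exp hL.isCompact.isClosed
    (hL.frontier_subset hL.zero_mem_frontier) hL.subset_ball hL.isPreconnected_compl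
    (exists_re_lt_connectedComponentIn_preimage_exp hL.isCompact hL.isPreconnected
      hL.isPreconnected_compl hL.zero_mem_frontier hL.subset_ball
      (hL.frontier_subset (mem_bdLift.1 hx)))

theorem lift_mem_connectedComponentIn (hL : LiftedIsotopy X h H) (ht : t ∈ Icc (0 : ℝ) 1)
    (hx : x ∈ bdLift X) (hz : z ∈ frontier (connectedComponentIn (hatSet X) x)) :
    H z t ∈ connectedComponentIn (hatXt h X t) (H x t) := by
  have hsub := frontier_connectedComponentIn_hatSet_subset X x
  refine ((hL.isLeftTail_connectedComponentIn hx).isPreconnected_frontier.image (fun w ↦ H w t)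
    ((hL.continuousOn_lift.uncurry_right t ht).mono hsub)).subset_connectedComponentIn
    ⟨x, mem_frontier_connectedComponentIn_hatSet hL.isCompact.isClosed hx, rfl⟩ ?_ ⟨z, hz, rfl⟩
  rintro _ ⟨w, hw, rfl⟩
  exact bdLift_subset_hatSet (hL.isClosed_XtSet ht) (hL.lift_mem_bdLift ht (hsub hw))

theorem isLeftTail_connectedComponentIn_lift (hL : LiftedIsotopy X h H) (ht : t ∈ Icc (0 : ℝ) 1)
    (hx : x ∈ bdLift X) : IsLeftTail (connectedComponentIn (hatXt h X t) (H x t)) := by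
  have hl : ∀ m : ℝ, ∃ z ∈ connectedComponentIn (hatSet (XtSet h X t)) (H x t), z.re < m := by
    intro m
    obtain ⟨m', hm'⟩ := hL.exists_forall_re_lt m
    obtain ⟨z, hz, hzm⟩ := hL.exists_re_lt_frontier_connectedComponentIn hx m'
    exact ⟨H z t, hL.lift_mem_connectedComponentIn ht hx hz,
      hm' z (frontier_connectedComponentIn_hatSet_subset X x hz) hzm t ht⟩
  rw [hatXt, ← hatSet]
  rw [hatSet_eq] at hl ⊢
  exact isLeftTail_connectedComponentIn_preimage_exp (hL.isClosed_XtSet ht) (hL.zero_mem_XtSet ht)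
    (hL.XtSet_subset_ball t ht) (hL.isPreconnected_compl_XtSet ht) hl

theorem disjoint_connectedComponentIn_lift (hL : LiftedIsotopy X h H) (ht : t ∈ Icc (0 : ℝ) 1)
    (hx : x ∈ bdLift X) (hy : y ∈ bdLift X) (hxy : x ∉ connectedComponentIn (hatSet X) y) :
    Disjoint (connectedComponentIn (hatXt h X t) (H x t))
      (connectedComponentIn (hatXt h X t) (H y t)) := by
  obtain ⟨J, hJ, hJX, hJH⟩ := hL.exists_leftInvOn_lift ht
  have hXt := hL.isClosed_XtSet ht
  refine disjoint_connectedComponentIn (bdLift_subset_hatSet hXt (hL.lift_mem_bdLift ht hx))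
    fun hmem ↦ hxy ?_
  have hDt := hL.isLeftTail_connectedComponentIn_lift ht hy
  have hsub := frontier_connectedComponentIn_hatSet_subset (XtSet h X t) (H y t)
  have himg : J '' frontier (connectedComponentIn (hatXt h X t) (H y t)) ⊆
      connectedComponentIn (hatSet X) y :=
    (hDt.isPreconnected_frontier.image J (hJ.mono hsub)).subset_connectedComponentIn
      ⟨H y t, mem_frontier_connectedComponentIn_hatSet hXt (hL.lift_mem_bdLift ht hy), hJH hy⟩
      (image_subset_iff.2 fun z hz ↦ bdLift_subset_hatSet hL.isCompact.isClosed (hJX (hsub hz)))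
  refine himg ⟨H x t, ?_, hJH hx⟩
  rw [connectedComponentIn_eq hmem]
  exact mem_frontier_connectedComponentIn_hatSet hXt (hL.lift_mem_bdLift ht hx)

theorem exists_mem_frontier_eq_log (hL : LiftedIsotopy X h H) (ht : t ∈ Icc (0 : ℝ) 1)
    (hx : x ∈ bdLift X) (hy : y ∈ bdLift X) {Λ₀ Λ : ℂ → ℂ}
    (hΛ₀ : IsNormalizedLog (connectedComponentIn (hatSet X) y) x Λ₀)
    (hΛ : IsNormalizedLog (connectedComponentIn (hatXt h X t) (H y t)) (H x t) Λ) :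
    ∃ w ∈ frontier (connectedComponentIn (hatSet X) y), Λ₀ w = log (x - w) ∧
      Λ (H w t) = log (H x t - H w t) ∧ ∀ s ∈ Icc (0 : ℝ) 1, 0 < (H x s - H w s).re := by
  obtain ⟨m₀, hm₀⟩ := hΛ₀.exists_forall_eq_log_sub
  obtain ⟨m, hm⟩ := hΛ.exists_forall_eq_log_sub
  obtain ⟨b, hb⟩ := isCompact_Icc.bddBelow_image
    (continuous_re.comp_continuousOn (hL.continuousOn_lift.uncurry_left x hx))
  obtain ⟨m', hm'⟩ := hL.exists_forall_re_lt (min m b)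
  obtain ⟨w, hw, hwm⟩ := hL.exists_re_lt_frontier_connectedComponentIn hy (min m₀ m')
  have hwX := frontier_connectedComponentIn_hatSet_subset X y hw
  have hre := hm' w hwX (hwm.trans_le (min_le_right _ _))
  refine ⟨w, hw, hm₀ w ?_ (hwm.trans_le (min_le_left _ _)),
    hm _ (hL.lift_mem_connectedComponentIn ht hy hw) ((hre t ht).trans_le (min_le_left _ _)),
    fun s hs ↦ ?_⟩
  · exact (hL.isLeftTail_connectedComponentIn hy).isClosed.frontier_subset hw
  · exact sub_pos.2 (((hre s hs).trans_le (min_le_right _ _)).trans_le (hb ⟨s, hs, rfl⟩))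

theorem injOn_lift (hL : LiftedIsotopy X h H) (ht : t ∈ Icc (0 : ℝ) 1) :
    InjOn (fun z ↦ H z t) (bdLift X) :=
  have ⟨_, _, _, hJH⟩ := hL.exists_leftInvOn_lift ht
  hJH.injOn

theorem exists_log_lift_sub_lift (hL : LiftedIsotopy X h H) (ht : t ∈ Icc (0 : ℝ) 1)
    (hx : x ∈ bdLift X) (hy : y ∈ bdLift X) (hxy : x ∉ connectedComponentIn (hatSet X) y)
    {Λ₀ Λ : ℂ → ℂ} (hΛ₀ : IsNormalizedLog (connectedComponentIn (hatSet X) y) x Λ₀)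
    (hΛ : IsNormalizedLog (connectedComponentIn (hatXt h X t) (H y t)) (H x t) Λ) :
    ∃ ℓ : ℝ → ℂ, ContinuousOn ℓ (Icc 0 1) ∧ (∀ s ∈ Icc (0 : ℝ) 1, exp (ℓ s) = H x s - H y s) ∧
      ℓ 0 = Λ₀ y ∧ ℓ t = Λ (H y t) := by
  have h0 : (0 : ℝ) ∈ Icc (0 : ℝ) 1 := by simp
  have hD := hL.isLeftTail_connectedComponentIn hy
  set A := frontier (connectedComponentIn (hatSet X) y)
  have hAX : A ⊆ bdLift X := frontier_connectedComponentIn_hatSet_subset X y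
  have hAD : A ⊆ connectedComponentIn (hatSet X) y := hD.isClosed.frontier_subset
  have hyA : y ∈ A := mem_frontier_connectedComponentIn_hatSet hL.isCompact.isClosed hy
  have hHx : ContinuousOn (H x) (Icc 0 1) := hL.continuousOn_lift.uncurry_left x hx
  obtain ⟨G, hG, hGe, hG0⟩ := exists_homotopy_log (S := A) (F := fun w s ↦ H x s - H w s)
    ((hHx.comp continuousOn_snd fun _ hp ↦ hp.2).sub
      (hL.continuousOn_lift.mono (prod_mono_left hAX)))
    (fun w hw s hs heq ↦ hxy (hL.injOn_lift hs hx (hAX hw) (sub_eq_zero.1 heq) ▸ hAD hw))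
    (hΛ₀.continuousOn.mono hAD)
    (fun w hw ↦ by rw [hΛ₀.exp_eq w (hAD hw), hL.lift_zero x hx, hL.lift_zero w (hAX hw)])
  refine ⟨G y, hG.uncurry_left y hyA, hGe y hyA, hG0 y hyA, ?_⟩
  obtain ⟨w, hw, hw0, hwt, hre⟩ := hL.exists_mem_frontier_eq_log ht hx hy hΛ₀ hΛ
  have hmaps : MapsTo (fun w ↦ H w t) A (connectedComponentIn (hatXt h X t) (H y t)) := fun w hw ↦
    hL.lift_mem_connectedComponentIn ht hy hw
  have hA := sub_eq_sub_of_exp_eq (f := fun w ↦ G w t) (g := fun w ↦ Λ (H w t))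
    hD.isPreconnected_frontier (hG.uncurry_right t ht)
    (hΛ.continuousOn.comp ((hL.continuousOn_lift.uncurry_right t ht).mono hAX) hmaps)
    (fun w hw ↦ by rw [hGe w hw t ht, hΛ.exp_eq _ (hmaps hw)]) hyA hw
  have hI := sub_eq_sub_of_exp_eq (f := G w) (g := fun s ↦ log (H x s - H w s)) isPreconnected_Icc
    (hG.uncurry_left w hw)
    ((hHx.sub (hL.continuousOn_lift.uncurry_left w (hAX hw))).clog fun s hs ↦ .inl (hre s hs))
    (fun s hs ↦ by rw [hGe w hw s hs, exp_log fun h ↦ (hre s hs).ne' (by simp [h])]) ht h0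
  rw [hG0 w hw, hw0, hL.lift_zero x hx, hL.lift_zero w (hAX hw), sub_self, ← hwt] at hI
  exact sub_eq_zero.1 (hA.trans hI)

theorem liesAbove_iff_liesAbove (hL : LiftedIsotopy X h H) (ht : t ∈ Icc (0 : ℝ) 1)
    (hx : x ∈ bdLift X) (hy : y ∈ bdLift X) (hxy : x ∉ connectedComponentIn (hatSet X) y) :
    LiesAbove (connectedComponentIn (hatXt h X t) (H x t))
        (connectedComponentIn (hatXt h X t) (H y t)) ↔
      LiesAbove (connectedComponentIn (hatSet X) x) (connectedComponentIn (hatSet X) y) := by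
  have h0 : (0 : ℝ) ∈ Icc (0 : ℝ) 1 := by simp
  have hmem₀ : ∀ {z}, z ∈ bdLift X → z ∈ connectedComponentIn (hatSet X) z := fun hz ↦
    mem_connectedComponentIn (bdLift_subset_hatSet hL.isCompact.isClosed hz)
  have hmem : ∀ {z}, z ∈ bdLift X → H z t ∈ connectedComponentIn (hatXt h X t) (H z t) :=
    fun hz ↦ mem_connectedComponentIn
      (bdLift_subset_hatSet (hL.isClosed_XtSet ht) (hL.lift_mem_bdLift ht hz))
  have hC₀ := hL.isLeftTail_connectedComponentIn hx
  have hD₀ := hL.isLeftTail_connectedComponentIn hy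
  have hC := hL.isLeftTail_connectedComponentIn_lift ht hx
  have hD := hL.isLeftTail_connectedComponentIn_lift ht hy
  have hdisj₀ := disjoint_connectedComponentIn
    (bdLift_subset_hatSet hL.isCompact.isClosed hx) hxy
  have hdisj := hL.disjoint_connectedComponentIn_lift ht hx hy hxy
  have hyx := hdisj₀.notMem_of_mem_right (hmem₀ hy)
  obtain ⟨Λ₀, hΛ₀⟩ := hD₀.exists_isNormalizedLog hxy
  obtain ⟨M₀, hM₀⟩ := hC₀.exists_isNormalizedLog hyx
  obtain ⟨Λ, hΛ⟩ := hD.exists_isNormalizedLog (hdisj.notMem_of_mem_left (hmem hx))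
  obtain ⟨M, hM⟩ := hC.exists_isNormalizedLog (hdisj.notMem_of_mem_right (hmem hy))
  obtain ⟨ℓ, hℓ, hℓe, hℓ0, hℓt⟩ := hL.exists_log_lift_sub_lift ht hx hy hxy hΛ₀ hΛ
  obtain ⟨μ, hμ, hμe, hμ0, hμt⟩ := hL.exists_log_lift_sub_lift ht hy hx hyx hM₀ hM
  have hconst : ℓ t - μ t = ℓ 0 - μ 0 :=
    eq_of_exp_comp_const (f := fun s ↦ ℓ s - μ s) (c := -1) isPreconnected_Icc (hℓ.sub hμ)
      (fun s hs ↦ by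
        rw [exp_sub, hℓe s hs, hμe s hs, ← neg_sub (H y s), neg_div, div_self]
        exact hμe s hs ▸ exp_ne_zero _) ht h0
  rw [hC.liesAbove_iff hD hdisj (hmem hx) (hmem hy) hΛ hM,
    hC₀.liesAbove_iff hD₀ hdisj₀ (hmem₀ hx) (hmem₀ hy) hΛ₀ hM₀, ← sub_eq_iff_eq_add', ←
    sub_eq_iff_eq_add', ← hℓ0, ← hμ0, ← hℓt, ← hμt, hconst]

end LiftedIsotopy

end Isotopy

/-- if the component `C` of `X̂⁰` lies above the component `D`, then for
every `t` the component `C^t` of `X̂^t` (the component containing `𝐡^t x` for any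
`x ∈ C ∩ exp⁻¹(Bd(X) \ {0})`) lies above `D^t`. -/
theorem liesAbove_preserved
    (X : Set ℂ) (hXne : X.Nonempty) (hXcpt : IsCompact X) (hXconn : IsConnected X)
    (hXns : IsConnected Xᶜ) (h0 : (0:ℂ) ∈ frontier X) (hXb : X ⊆ Metric.ball 0 1)
    (h : ℂ → ℝ → ℂ)
    (hcont : ContinuousOn (fun p : ℂ × ℝ => h p.1 p.2) (frontier X ×ˢ Set.Icc 0 1))
    (hinj : ∀ t ∈ Set.Icc (0:ℝ) 1, Set.InjOn (fun z => h z t) (frontier X))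
    (hid : ∀ z ∈ frontier X, h z 0 = z)
    (hfix : ∀ t ∈ Set.Icc (0:ℝ) 1, h 0 t = 0)
    (hXtb : ∀ t ∈ Set.Icc (0:ℝ) 1, XtSet h X t ⊆ Metric.ball 0 1)
    -- 𝐡 = H, the lift of h with 𝐡⁰ = id :
    (H : ℂ → ℝ → ℂ)
    (hHcont : ContinuousOn (fun p : ℂ × ℝ => H p.1 p.2) (bdLift X ×ˢ Set.Icc 0 1))
    (hHinj : ∀ t ∈ Set.Icc (0:ℝ) 1, Set.InjOn (fun z => H z t) (bdLift X))
    (hH0 : ∀ z ∈ bdLift X, H z 0 = z)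
    (hHlift : ∀ z ∈ bdLift X, ∀ t ∈ Set.Icc (0:ℝ) 1,
      Complex.exp (H z t) = h (Complex.exp z) t)
    (C D : Set ℂ) (hC : C ∈ componentsOf (hatSet X)) (hD : D ∈ componentsOf (hatSet X))
    (hCD : LiesAbove C D) :
    ∀ t ∈ Set.Icc (0:ℝ) 1, ∀ x ∈ C ∩ bdLift X, ∀ y ∈ D ∩ bdLift X,
      LiesAbove (connectedComponentIn (hatXt h X t) (H x t))
        (connectedComponentIn (hatXt h X t) (H y t)) := by
  intro t ht x hx y hy
  have hL : LiftedIsotopy X h H :=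
    { isCompact := hXcpt
      isPreconnected := hXconn.isPreconnected
      isPreconnected_compl := hXns.isPreconnected
      zero_mem_frontier := h0
      subset_ball := hXb
      continuousOn := hcont
      injOn := hinj
      map_zero_right := hid
      map_zero_left := hfix
      XtSet_subset_ball := hXtb
      continuousOn_lift := hHcont
      lift_zero := hH0
      exp_lift := hHlift }
  obtain ⟨c, -, rfl⟩ := hC
  obtain ⟨d, -, rfl⟩ := hD
  rw [connectedComponentIn_eq hx.1, connectedComponentIn_eq hy.1] at hCD
  have hxy : x ∉ connectedComponentIn (hatSet X) y := fun hxy ↦ by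
    obtain ⟨s, ⟨-, hsC, hsD, -⟩, -⟩ := hCD
    exact (hsC 0 (by simp)).2 (connectedComponentIn_eq hxy ▸ hsD)
  exact (hL.liesAbove_iff_liesAbove ht hx.2 hy.2 hxy).2 hCD
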